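/- Let p_1,…,p_m ∈ ℕ with each p_i ≥ 2 and Σ_{i=1}^m 1/p_i < m−1, and let K be a nontrivial conjugacy class of Γ_{p_1,…,p_m} contained in L_{p_1,…,p_m}. Then ℙ[Z_K(H_n) = n] → 1 as n → ∞. -/

import Mathlib

open Filter Topology Asymptotics
open scoped TensorProduct

/-- the relations `x_i ^ p_i = x_j ^ p_j` defining `Γ_{p_1,…,p_m}` -/
def torusRels (m : ℕ) (p : Fin m → ℕ) : Set (FreeGroup (Fin m)) :=
  {w : FreeGroup (Fin m) | ∃ i j : Fin m, w = FreeGroup.of i ^ p i * (FreeGroup.of j ^ p j)⁻¹}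

/-- the group `Γ_{p_1,…,p_m} = ⟨x_1,…,x_m ∣ x_1^{p_1} = ⋯ = x_m^{p_m}⟩` -/
abbrev TorusKnotGroup (m : ℕ) (p : Fin m → ℕ) : Type :=
  PresentedGroup (torusRels m p)

/-- the relations `x_i ^ p_i = 1` defining `C_{p_1} * ⋯ * C_{p_m}` -/
def cyclicRels (m : ℕ) (p : Fin m → ℕ) : Set (FreeGroup (Fin m)) :=
  {w : FreeGroup (Fin m) | ∃ i : Fin m, w = FreeGroup.of i ^ p i}

/-- the free product `C_{p_1} * ⋯ * C_{p_m}` of cyclic groups of orders `p_1, …, p_m`,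
presented as `⟨x_1,…,x_m ∣ x_1^{p_1} = ⋯ = x_m^{p_m} = 1⟩`. -/
abbrev CyclicFreeProduct (m : ℕ) (p : Fin m → ℕ) : Type :=
  PresentedGroup (cyclicRels m p)

theorem cyclicFreeProduct_gen_pow (m : ℕ) (p : Fin m → ℕ) (i : Fin m) :
    (PresentedGroup.of (rels := cyclicRels m p) i) ^ p i = 1 := by
  have : PresentedGroup.mk (cyclicRels m p) (FreeGroup.of i ^ p i) = 1 := by
    apply (QuotientGroup.eq_one_iff _).mpr
    exact Subgroup.subset_normalClosure ⟨i, rfl⟩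
  exact (map_pow _ _ _).symm.trans this

/-- the projection `Φ_{p_1,…,p_m} : Γ_{p_1,…,p_m} → C_{p_1} * ⋯ * C_{p_m}`,
sending each generator `x_j` to the fixed generator of `C_{p_j}`;
its kernel is `L_{p_1,…,p_m}`. -/
noncomputable def PhiMap (m : ℕ) (p : Fin m → ℕ) :
    TorusKnotGroup m p →* CyclicFreeProduct m p :=
  PresentedGroup.toGroup (f := fun i => PresentedGroup.of i) (by
    rintro w ⟨i, j, rfl⟩
    simp only [map_mul, map_pow, map_inv, FreeGroup.lift_apply_of]
    rw [cyclicFreeProduct_gen_pow, cyclicFreeProduct_gen_pow]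
    simp)

/-- `Z_g(H)`: the number of fixed points of `g` acting on the coset space `G ⧸ H`.
For any `g` in a conjugacy class `K`, this equals `Z_K(H)`. -/
noncomputable def fixedCosetCount {G : Type*} [Group G] (g : G) (H : Subgroup G) : ℕ :=
  Nat.card {x : G ⧸ H // g • x = x}

/-- the probability that a uniformly random index `n` subgroup of `G` satisfies `P` -/
noncomputable def subgroupProb (G : Type*) [Group G] (n : ℕ) (P : Subgroup G → Prop) : ℝ :=
  (Nat.card {H : Subgroup G // H.index = n ∧ P H} : ℝ) /
    (Nat.card {H : Subgroup G // H.index = n} : ℝ)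


/-- number of permutations of `k` points with `τ ^ p = 1` -/
noncomputable def torsCnt (p k : ℕ) : ℕ := Nat.card {τ : Equiv.Perm (Fin k) // τ ^ p = 1}

/-- points that are minimal in their cycle -/
noncomputable def cycMins {k : ℕ} (τ : Equiv.Perm (Fin k)) : Finset (Fin k) :=
  by classical exact Finset.univ.filter (fun v => ∀ j : ℕ, v ≤ (τ ^ j) v)

theorem mem_cycMins {k : ℕ} (τ : Equiv.Perm (Fin k)) (v : Fin k) :
    v ∈ cycMins τ ↔ ∀ j : ℕ, v ≤ (τ ^ j) v := by
  simp [cycMins]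

theorem exists_cycMins {k p : ℕ} (hp : 0 < p) (τ : Equiv.Perm (Fin k)) (hτ : τ ^ p = 1)
    (x : Fin k) : ∃ u ∈ cycMins τ, ∃ j < p, (τ ^ j) u = x := by
  obtain ⟨i, hi, hmin⟩ := Finset.exists_min_image (Finset.range p) (fun j => (τ ^ j) x)
    ⟨0, by simpa using hp⟩
  have key : ∀ j : ℕ, (τ ^ i) x ≤ (τ ^ j) x := by
    intro j
    have h1 : τ ^ j = τ ^ (j % p) := by
      conv_lhs => rw [← Nat.mod_add_div j p, pow_add, pow_mul, hτ, one_pow, mul_one]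
    rw [h1]
    exact hmin _ (Finset.mem_range.2 (Nat.mod_lt _ hp))
  have hi' : i < p := Finset.mem_range.1 hi
  refine ⟨(τ ^ i) x, (mem_cycMins _ _).2 fun j => ?_, (p - i) % p, Nat.mod_lt _ hp, ?_⟩
  · rw [← Equiv.Perm.mul_apply, ← pow_add]; exact key _
  · have h1 : τ ^ ((p - i) % p) = τ ^ (p - i) := by
      conv_rhs => rw [← Nat.mod_add_div (p - i) p, pow_add, pow_mul, hτ, one_pow, mul_one]
    rw [h1, ← Equiv.Perm.mul_apply, ← pow_add, Nat.sub_add_cancel hi'.le, hτ]; rfl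

theorem card_cycMins {k p : ℕ} (hp : 0 < p) (τ : Equiv.Perm (Fin k)) (hτ : τ ^ p = 1) :
    k ≤ p * (cycMins τ).card := by
  classical
  have : (Finset.univ : Finset (Fin k)) ⊆
      (Finset.range p ×ˢ cycMins τ).image (fun a => (τ ^ a.1) a.2) := by
    intro x _
    obtain ⟨u, hu, j, hj, h⟩ := exists_cycMins hp τ hτ x
    exact Finset.mem_image.2 ⟨(j, u), by simp [hu, hj], h⟩
  have h2 := Finset.card_le_card this
  have h3 := h2.trans Finset.card_image_le
  simpa using h3

/-- two minimal points in the same cycle agree -/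
theorem cycMins_unique {k p : ℕ} (hp : 0 < p) (τ : Equiv.Perm (Fin k)) (hτ : τ ^ p = 1)
    {u v : Fin k} (hu : u ∈ cycMins τ) (hv : v ∈ cycMins τ) (j : ℕ) (h : (τ ^ j) u = v) : u = v := by
  apply le_antisymm
  · rw [← h]; exact (mem_cycMins _ _).1 hu j
  · have : u = (τ ^ (p * j - j)) v := by
      rw [← h, ← Equiv.Perm.mul_apply, ← pow_add, Nat.sub_add_cancel (Nat.le_mul_of_pos_left j hp),
        pow_mul, hτ, one_pow]; rfl
    rw [this]; exact (mem_cycMins _ _).1 hv _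

theorem cyc_determined_aux {k p : ℕ} (hp : 0 < p) (σ τ : Equiv.Perm (Fin k)) (hσ : σ ^ p = 1)
    (hτ : τ ^ p = 1) (hM : cycMins σ = cycMins τ) (hag : ∀ v, v ∉ cycMins σ → σ v = τ v) : σ = τ := by
  ext1 v
  by_cases hv : v ∈ cycMins σ
  swap
  · exact hag v hv
  -- w = σ v
  set w := σ v with hw
  -- first return
  have hex : ∃ j, (σ ^ j) w ∈ cycMins σ := by
    refine ⟨p - 1, ?_⟩
    rw [hw, ← Equiv.Perm.mul_apply, ← pow_succ, Nat.sub_add_cancel hp, hσ]; exact hv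
  classical
  set l := Nat.find hex with hl
  have hlmem : (σ ^ l) w ∈ cycMins σ := Nat.find_spec hex
  have hlv : v = (σ ^ l) w := by
    apply cycMins_unique hp σ hσ hv hlmem (l + 1)
    rw [pow_succ, Equiv.Perm.mul_apply]
  have hpow : ∀ j ≤ l, (τ ^ j) w = (σ ^ j) w := by
    intro j
    induction j with
    | zero => simp
    | succ j ih =>
      intro hj
      have : (σ ^ j) w ∉ cycMins σ := Nat.find_min hex (by omega)
      rw [pow_succ', pow_succ', Equiv.Perm.mul_apply, Equiv.Perm.mul_apply, ih (by omega), hag _ this]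
  have h1 : (τ ^ l) w = v := by rw [hpow l le_rfl, ← hlv]
  -- w = τ u
  obtain ⟨u, hu⟩ := τ.surjective w
  have huM : u ∈ cycMins σ := by
    by_contra hcon
    have h2 : σ u = σ v := by rw [hag u hcon, hu]
    exact hcon (σ.injective h2 ▸ hv)
  have : u = v := by
    apply cycMins_unique hp τ hτ (hM ▸ huM) (hM ▸ hv) (l + 1)
    rw [pow_succ, Equiv.Perm.mul_apply, hu, h1]
  rw [← this, hu]

theorem torsCnt_le (p k : ℕ) (hp : 0 < p) :
    torsCnt p k ≤ k ^ (k - (k + p - 1) / p) * 2 ^ k := by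
  classical
  unfold torsCnt
  rcases Nat.eq_zero_or_pos k with rfl | hk
  · have : Nat.card {τ : Equiv.Perm (Fin 0) // τ ^ p = 1} ≤ 1 := by
      rw [Nat.card_eq_fintype_card]
      exact Fintype.card_le_one_iff_subsingleton.2 inferInstance
    simpa using this
  rw [Nat.card_eq_fintype_card, ← Finset.card_univ]
  refine (Finset.card_le_mul_card_image (f := fun τ : {τ : Equiv.Perm (Fin k) // τ ^ p = 1} =>
    cycMins τ.1) Finset.univ (k ^ (k - (k + p - 1) / p)) ?_).trans ?_
  · intro M hM
    obtain ⟨τ0, -, h0⟩ := Finset.mem_image.1 hM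
    have hcard : k ≤ p * M.card := h0 ▸ card_cycMins hp τ0.1 τ0.2
    have h1 : (k + p - 1) / p ≤ M.card := by
      apply Nat.le_of_lt_succ
      rw [Nat.div_lt_iff_lt_mul hp, Nat.succ_mul, mul_comm]; omega
    have h2 : (Finset.univ.filter (fun τ : {τ : Equiv.Perm (Fin k) // τ ^ p = 1} =>
        cycMins τ.1 = M)).card ≤ Fintype.card ({v // v ∉ M} → Fin k) := by
      rw [← Finset.card_univ]
      apply Finset.card_le_card_of_injOn (fun τ => fun v => τ.1 v.1) (by simp)
      intro σ hσ τ hτ hst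
      have hσ' : cycMins σ.1 = M := by simpa using hσ
      have hτ' : cycMins τ.1 = M := by simpa using hτ
      apply Subtype.ext
      apply cyc_determined_aux hp _ _ σ.2 τ.2 (hσ'.trans hτ'.symm)
      intro v hv
      exact congrFun hst ⟨v, hσ' ▸ hv⟩
    refine h2.trans ?_
    rw [Fintype.card_fun, Fintype.card_fin]
    apply Nat.pow_le_pow_right hk
    rw [Fintype.card_subtype_compl]
    simp; omega
  · gcongr
    refine (Finset.card_le_univ _).trans ?_
    simp

theorem torsCnt_ge (p k : ℕ) (hp : 2 ≤ p) :
    (k.factorial : ℝ) / ((p.factorial : ℝ) * (p : ℝ) ^ k * ((k / p).factorial : ℝ)) ≤ torsCnt p k := by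
  classical
  have hp0 : 0 < p := by omega
  set q := k / p with hq
  have hqp : q * p ≤ k := Nat.div_mul_le_self k p
  have hsub : (Finset.univ.filter (fun g : Equiv.Perm (Fin k) => g.cycleType = Multiset.replicate q p)).card
      ≤ torsCnt p k := by
    unfold torsCnt
    rw [Nat.card_eq_fintype_card, Fintype.card_subtype]
    apply Finset.card_le_card
    intro g hg
    simp only [Finset.mem_filter, Finset.mem_univ, true_and] at hg ⊢
    rw [← orderOf_dvd_iff_pow_eq_one, ← Equiv.Perm.lcm_cycleType, hg, Multiset.lcm_dvd]
    intro b hb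
    rw [Multiset.eq_of_mem_replicate hb]
  have h1 := Equiv.Perm.card_of_cycleType_mul_eq (α := Fin k) (Multiset.replicate q p)
  rw [if_pos] at h1
  swap
  · refine ⟨by simpa using hqp, fun a ha => by rw [Multiset.eq_of_mem_replicate ha]; exact hp⟩
  have h3 : (∏ n ∈ (Multiset.replicate q p).toFinset, ((Multiset.replicate q p).count n).factorial) ≤ q.factorial := by
    rcases Nat.eq_zero_or_pos q with h0 | h0
    · rw [h0]; simp
    · rw [Multiset.toFinset_replicate, if_neg (by omega)]; simp
  have h4 : (k - q * p).factorial ≤ p.factorial := by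
    apply Nat.factorial_le
    have := Nat.mod_lt k hp0
    have := Nat.div_add_mod k p
    rw [mul_comm, ← hq] at this
    omega
  have h5 : p ^ q ≤ p ^ k := Nat.pow_le_pow_right hp0 (Nat.div_le_self _ _)
  rw [div_le_iff₀ (by positivity)]
  have : k.factorial ≤ torsCnt p k * (p.factorial * p ^ k * q.factorial) := by
    simp only [Fintype.card_fin, Multiset.sum_replicate, Multiset.prod_replicate, smul_eq_mul] at h1
    rw [← h1]
    gcongr
  exact_mod_cast this

/-- the pair acts transitively (every invariant predicate is constant) -/
def ConnPair {X : Type} (π ρ : Equiv.Perm X) : Prop :=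
  ∀ F : X → Prop, (∀ v, F (π v) ↔ F v) → (∀ v, F (ρ v) ↔ F v) → ∀ u v, F u ↔ F v

/-- existence of a transitive pair of degree `n` with `f` fixed points of the first generator -/
def Backbone (p₁ p₂ n f : ℕ) : Prop :=
  ∃ (X : Type) (_ : Finite X) (π ρ : Equiv.Perm X), Nat.card X = n ∧ π ^ p₁ = 1 ∧ ρ ^ p₂ = 1 ∧
    ConnPair π ρ ∧ {v | π v = v}.ncard = f

theorem addRight_pow_zmod (p : ℕ) : (Equiv.addRight (1 : ZMod p)) ^ p = 1 := by
  have : ∀ k : ℕ, ∀ x : ZMod p, ((Equiv.addRight (1 : ZMod p)) ^ k) x = x + k := by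
    intro k
    induction k with
    | zero => simp
    | succ k ih =>
      intro x
      rw [pow_succ', Equiv.Perm.mul_apply, ih]
      simp [add_assoc]
  ext1 x
  rw [this]; simp

theorem zmod_pred_const {p : ℕ} [NeZero p] (G : ZMod p → Prop) (h : ∀ i, G (i + 1) ↔ G i) (i : ZMod p) :
    G i ↔ G 0 := by
  have : ∀ k : ℕ, G (k : ZMod p) ↔ G 0 := by
    intro k
    induction k with
    | zero => simp
    | succ k ih => rw [Nat.cast_succ, h, ih]
  simpa using this i.val

theorem backbone_glue {p₁ p₂ : ℕ} (hp₁ : 2 ≤ p₁) {X Y : Type} [Finite X] [Finite Y]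
    (π ρ : Equiv.Perm X) (ρY : Equiv.Perm Y) (hπ : π ^ p₁ = 1) (hρ : ρ ^ p₂ = 1) (hρY : ρY ^ p₂ = 1)
    (hc : ConnPair π ρ) (c : ZMod p₁ ↪ X ⊕ Y) (hcX : ∃ i x, c i = Sum.inl x)
    (hcfix : ∀ i x, c i = Sum.inl x → π x = x)
    (hY : ∀ G : Y → Prop, (∀ y, G (ρY y) ↔ G y) → (∀ i y, c i = Sum.inr y → G y) → ∀ y, G y) :
    Backbone p₁ p₂ (Nat.card X + Nat.card Y) ({v | π v = v}.ncard + Nat.card Y - p₁) := by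
  classical
  have : NeZero p₁ := ⟨by omega⟩
  have hF1 : Fact (1 < p₁) := ⟨by omega⟩
  set s : Equiv.Perm (X ⊕ Y) := Equiv.Perm.sumCongr π 1 with hs
  set e : Equiv.Perm (X ⊕ Y) := (Equiv.addRight (1 : ZMod p₁)).viaEmbedding c with he
  have hsc : ∀ i, s (c i) = c i := by
    intro i
    rcases hci : c i with x | y
    · simp [hs, hcfix i x hci]
    · simp [hs]
  have hec : ∀ i, e (c i) = c (i + 1) := by
    intro i
    rw [he, Equiv.Perm.viaEmbedding_apply]; rfl
  have hen : ∀ v, v ∉ Set.range c → e v = v := by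
    intro v hv
    rw [he, Equiv.Perm.viaEmbedding_apply_of_notMem _ _ _ hv]
  have hdis : Equiv.Perm.Disjoint s e := by
    intro v
    by_cases hv : v ∈ Set.range c
    · obtain ⟨i, rfl⟩ := hv; exact Or.inl (hsc i)
    · exact Or.inr (hen v hv)
  have hs1 : s ^ p₁ = 1 := by
    have : s = Equiv.Perm.sumCongrHom X Y (π, 1) := rfl
    rw [this, ← map_pow, Prod.pow_mk, hπ, one_pow]; exact map_one _
  have he1 : e ^ p₁ = 1 := by
    have : e = Equiv.Perm.viaEmbeddingHom c (Equiv.addRight (1 : ZMod p₁)) := rfl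
    rw [this, ← map_pow, addRight_pow_zmod, map_one]
  have hval : ∀ v, v ∉ Set.range c → (s * e) v = s v := fun v hv => by
    rw [Equiv.Perm.mul_apply, hen v hv]
  have hvalc : ∀ i, (s * e) (c i) = c (i + 1) := fun i => by
    rw [Equiv.Perm.mul_apply, hec, hsc]
  refine ⟨X ⊕ Y, inferInstance, s * e, Equiv.Perm.sumCongr ρ ρY, by rw [Nat.card_sum], ?_, ?_, ?_, ?_⟩
  · rw [hdis.commute.mul_pow, hs1, he1, one_mul]
  · have : Equiv.Perm.sumCongr ρ ρY = Equiv.Perm.sumCongrHom X Y (ρ, ρY) := rfl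
    rw [this, ← map_pow, Prod.pow_mk, hρ, hρY]; exact map_one _
  · intro F h1 h2
    have hcyc : ∀ i, F (c i) ↔ F (c 0) := by
      apply zmod_pred_const (fun i => F (c i))
      intro i
      rw [← hvalc]; exact h1 _
    have hX : ∀ u v : X, F (Sum.inl u) ↔ F (Sum.inl v) := by
      apply hc (fun u => F (Sum.inl u))
      · intro v
        by_cases hv : (Sum.inl v : X ⊕ Y) ∈ Set.range c
        · obtain ⟨i, hi⟩ := hv
          rw [hcfix i v hi]
        · have := h1 (Sum.inl v)
          rw [hval _ hv] at this
          simpa [hs] using this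
      · intro v
        simpa using h2 (Sum.inl v)
    obtain ⟨i0, x0, h0⟩ := hcX
    have hYall : ∀ y, (F (Sum.inr y) ↔ F (c 0)) := by
      apply hY
      · intro y
        have := h2 (Sum.inr y)
        simp only [Equiv.Perm.sumCongr_apply, Sum.map_inr] at this
        rw [this]
      · intro i y hi
        rw [← hi]; exact hcyc i
    have hXall : ∀ x, (F (Sum.inl x) ↔ F (c 0)) := by
      intro x
      rw [hX x x0, ← h0]; exact hcyc i0
    have hall : ∀ v, F v ↔ F (c 0) := by
      rintro (x | y)
      · exact hXall x
      · exact hYall y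
    intro u v
    rw [hall u, hall v]
  · have hset : {v | (s * e) v = v} = {v | s v = v} \ Set.range c := by
      ext v
      by_cases hv : v ∈ Set.range c
      · simp only [Set.mem_ofPred_eq, Set.mem_sdiff, hv, not_true, and_false, iff_false]
        obtain ⟨i, rfl⟩ := hv
        rw [hvalc]
        intro h
        have := c.injective h
        simp at this
      · simp only [Set.mem_ofPred_eq, Set.mem_sdiff, hv, not_false_iff, and_true]
        rw [hval v hv]
    have hsub : Set.range c ⊆ {v | s v = v} := by
      rintro _ ⟨i, rfl⟩; exact hsc i
    rw [hset, Set.ncard_sdiff hsub]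
    have h1 : (Set.range c).ncard = p₁ := by
      rw [← Set.image_univ, Set.ncard_image_of_injective _ c.injective, Set.ncard_univ, Nat.card_zmod]
    have h2 : {v | s v = v} = (Sum.inl '' {v | π v = v}) ∪ Set.range (Sum.inr : Y → X ⊕ Y) := by
      ext v
      rcases v with x | y <;> simp [hs]
    rw [h1, h2, Set.ncard_union_eq, Set.ncard_image_of_injective _ Sum.inl_injective,
      ← Set.image_univ, Set.ncard_image_of_injective _ Sum.inr_injective, Set.ncard_univ]
    rw [Set.disjoint_left]
    rintro _ ⟨x, -, rfl⟩ ⟨y, hy⟩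
    cases hy

theorem card_zmod_ne (p : ℕ) [NeZero p] : Nat.card {i : ZMod p // i ≠ 0} = p - 1 := by
  rw [Nat.card_eq_fintype_card, Fintype.card_subtype_compl, ZMod.card]; simp

theorem backbone_big {p₁ p₂ n f : ℕ} (hp₁ : 2 ≤ p₁) (hp₂ : 2 ≤ p₂) (h : Backbone p₁ p₂ n f)
    (hf : 1 ≤ f) : Backbone p₁ p₂ (n + (p₁ - 1) * p₂) (f + (p₁ - 1) * p₂ - p₁) := by
  classical
  obtain ⟨X, hX, π, ρ, rfl, hπ, hρ, hc, rfl⟩ := h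
  have : NeZero p₁ := ⟨by omega⟩
  have : NeZero p₂ := ⟨by omega⟩
  obtain ⟨x0, hx0⟩ : {v | π v = v}.Nonempty := by
    rw [Set.nonempty_iff_ne_empty]; rintro h; rw [h] at hf; simp at hf
  let Y := {i : ZMod p₁ // i ≠ 0} × ZMod p₂
  have hY : Nat.card Y = (p₁ - 1) * p₂ := by
    rw [Nat.card_prod, card_zmod_ne, Nat.card_zmod]
  let ρY : Equiv.Perm Y := Equiv.prodCongr (Equiv.refl _) (Equiv.addRight (1 : ZMod p₂))
  have hρYp : ∀ k (y : Y), (ρY ^ k) y = (y.1, ((Equiv.addRight (1 : ZMod p₂)) ^ k) y.2) := by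
    intro k
    induction k with
    | zero => intro y; rfl
    | succ k ih => intro y; rw [pow_succ, pow_succ, Equiv.Perm.mul_apply, ih]; rfl
  let c0 : ZMod p₁ → X ⊕ Y := fun i => if h : i = 0 then Sum.inl x0 else Sum.inr (⟨i, h⟩, 0)
  have hinj : Function.Injective c0 := by
    intro i j hij
    simp only [c0] at hij
    split_ifs at hij with h1 h2 h2
    · rw [h1, h2]
    · exact congrArg (fun y : Y => y.1.1) (Sum.inr_injective hij)
  rw [← hY]
  refine backbone_glue hp₁ π ρ ρY hπ hρ ?_ hc ⟨c0, hinj⟩ ⟨0, x0, by simp [c0]⟩ ?_ ?_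
  · ext1 y
    rw [hρYp, addRight_pow_zmod]; rfl
  · intro i x hi
    simp only [c0, Function.Embedding.coeFn_mk] at hi
    split_ifs at hi with h1
    · cases hi; exact hx0
  · rintro G h1 h2 ⟨i, j⟩
    have := zmod_pred_const (fun j => G (i, j)) (fun j => h1 (i, j)) j
    rw [this]
    apply h2 i.1
    simp [c0, i.2]

theorem backbone_small {p₁ p₂ n f : ℕ} (hp₁ : 2 ≤ p₁) (h : Backbone p₁ p₂ n f)
    (hf : p₁ - 1 ≤ f) : Backbone p₁ p₂ (n + 1) (f - (p₁ - 1)) := by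
  classical
  obtain ⟨X, hX, π, ρ, rfl, hπ, hρ, hc, rfl⟩ := h
  have : NeZero p₁ := ⟨by omega⟩
  have := Fintype.ofFinite X
  obtain ⟨d⟩ : Nonempty ({i : ZMod p₁ // i ≠ 0} ↪ {v // π v = v}) := by
    apply Function.Embedding.nonempty_of_card_le
    rw [← Nat.card_eq_fintype_card, card_zmod_ne, ← Nat.card_eq_fintype_card]
    exact hf
  let c0 : ZMod p₁ → X ⊕ Unit := fun i => if h : i = 0 then Sum.inr () else Sum.inl (d ⟨i, h⟩).1
  have hinj : Function.Injective c0 := by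
    intro i j hij
    simp only [c0] at hij
    split_ifs at hij with h1 h2 h2
    · rw [h1, h2]
    · have := d.injective (Subtype.ext (Sum.inl_injective hij))
      simpa using this
  have hF1 : Fact (1 < p₁) := ⟨by omega⟩
  have key := backbone_glue (p₂ := p₂) (Y := Unit) hp₁ π ρ 1 hπ hρ (one_pow _) hc ⟨c0, hinj⟩
    ⟨1, _, by simp [c0]; rfl⟩ ?_ ?_
  · rw [show Nat.card Unit = 1 by simp] at key
    convert key using 1
    omega
  · intro i x hi
    simp only [c0, Function.Embedding.coeFn_mk] at hi
    split_ifs at hi with h1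
    · cases hi; exact (d _).2
  · rintro G h1 h2 ⟨⟩
    apply h2 0
    simp [c0]

theorem backbone_one (p₁ p₂ : ℕ) : Backbone p₁ p₂ 1 1 := by
  refine ⟨Unit, inferInstance, 1, 1, by simp, one_pow _, one_pow _, ?_, by simp⟩
  intro F _ _ u v; rfl

theorem backbone_iter_big {p₁ p₂ : ℕ} (hp₁ : 2 ≤ p₁) (hp₂ : 2 ≤ p₂) (t : ℕ) :
    Backbone p₁ p₂ (1 + t * ((p₁ - 1) * p₂)) (1 + t * ((p₁ - 1) * p₂ - p₁)) := by
  have hg : p₁ ≤ (p₁ - 1) * p₂ := by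
    calc p₁ ≤ (p₁ - 1) * 2 := by omega
      _ ≤ _ := by gcongr
  induction t with
  | zero => simpa using backbone_one p₁ p₂
  | succ t ih =>
    have := backbone_big hp₁ hp₂ ih (by omega)
    rw [Nat.succ_mul, Nat.succ_mul]
    convert this using 1 <;> omega

theorem backbone_iter_small {p₁ p₂ n f : ℕ} (hp₁ : 2 ≤ p₁) (h : Backbone p₁ p₂ n f) (r : ℕ)
    (hr : r * (p₁ - 1) ≤ f) : Backbone p₁ p₂ (n + r) (f - r * (p₁ - 1)) := by
  induction r with
  | zero => simpa using h
  | succ r ih =>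
    rw [Nat.succ_mul] at hr ⊢
    have := backbone_small hp₁ (ih (by omega)) (by omega)
    convert this using 1 <;> omega

/-- backbones with many fixed points exist in all large degrees -/
theorem backbone_exists {p₁ p₂ : ℕ} (hp₁ : 2 ≤ p₁) (hp₂ : 2 ≤ p₂) :
    ∃ c N : ℕ, ∀ n, N ≤ n → ∃ f, f ≤ n ∧ Backbone p₁ p₂ n f ∧
      (n : ℝ) * (1 - 1 / p₁ - 1 / p₂) ≤ (1 - 1 / p₁) * ((f : ℝ) + c) := by
  set M := (p₁ - 1) * p₂ with hM
  set g := M - p₁ with hgdef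
  have hg : p₁ ≤ M := by
    calc p₁ ≤ (p₁ - 1) * 2 := by omega
      _ ≤ _ := by rw [hM]; gcongr
  refine ⟨M * (p₁ - 1) + 2 * M, 2 + M * (M * (p₁ - 1)), fun n hn => ?_⟩
  set t := (n - 1) / M with ht
  set r := (n - 1) % M with hr
  have hMpos : 0 < M := by omega
  have hrM : r < M := Nat.mod_lt _ hMpos
  have hdm : t * M + r = n - 1 := by rw [mul_comm]; exact Nat.div_add_mod _ _
  have htbig : M * (p₁ - 1) ≤ t := by
    rw [ht, Nat.le_div_iff_mul_le hMpos, mul_comm]; omega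
  have hok : r * (p₁ - 1) ≤ 1 + t * g := by
    rcases Nat.eq_zero_or_pos g with h0 | h0
    · -- both are 2
      have hMp : M = p₁ := by omega
      have : p₁ = 2 := by
        by_contra hne
        have : (p₁ - 1) * 2 ≤ M := by rw [hM]; gcongr
        omega
      have : r ≤ 1 := by omega
      rw [‹p₁ = 2›]; omega
    · calc r * (p₁ - 1) ≤ M * (p₁ - 1) := by gcongr
        _ ≤ t := htbig
        _ ≤ t * g := Nat.le_mul_of_pos_right _ h0
        _ ≤ _ := by omega
  have hB := backbone_iter_small hp₁ (backbone_iter_big hp₁ hp₂ t) r hok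
  have htg : t * g ≤ t * M := by gcongr; omega
  refine ⟨1 + t * g - r * (p₁ - 1), by omega, ?_, ?_⟩
  · convert hB using 1
    rw [← hM]; omega
  · have hrp : r * (p₁ - 1) ≤ M * (p₁ - 1) := by gcongr
    have h1 : t * g ≤ (1 + t * g - r * (p₁ - 1)) + M * (p₁ - 1) := by omega
    have h1' : (t : ℝ) * g ≤ ((1 + t * g - r * (p₁ - 1) : ℕ) : ℝ) + ((M * (p₁ - 1) : ℕ) : ℝ) := by
      exact_mod_cast h1
    have h2 : n ≤ t * M + 2 * M := by omega
    have h2' : (n : ℝ) ≤ (t : ℝ) * M + 2 * M := by exact_mod_cast h2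
    have hgM : (g : ℝ) ≤ M := by exact_mod_cast (Nat.sub_le _ _)
    have hg0 : (0 : ℝ) ≤ g := by positivity
    have hMr : (M : ℝ) = ((p₁ : ℝ) - 1) * p₂ := by
      rw [hM]; push_cast [Nat.cast_sub (show 1 ≤ p₁ by omega)]; ring
    have hgr : (g : ℝ) = M - p₁ := by rw [hgdef]; push_cast [Nat.cast_sub hg]; ring
    have hp1r : (2 : ℝ) ≤ p₁ := by exact_mod_cast hp₁
    have hp2r : (2 : ℝ) ≤ p₂ := by exact_mod_cast hp₂
    have hM0 : (0 : ℝ) < M := by exact_mod_cast hMpos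
    have hal : (1 - 1 / (p₁ : ℝ) - 1 / p₂) = (1 - 1 / p₁) * (g / M) := by
      rw [hgr, hMr]
      have : (p₁ : ℝ) - 1 ≠ 0 := by linarith
      field_simp
    have hpos : (0 : ℝ) ≤ 1 - 1 / p₁ := by
      rw [sub_nonneg, div_le_one (by linarith)]; linarith
    rw [hal, mul_left_comm]
    apply mul_le_mul_of_nonneg_left _ hpos
    have h3 : (n : ℝ) * (g / M) ≤ ((t : ℝ) * M + 2 * M) * (g / M) := by gcongr
    have h4 : ((t : ℝ) * M + 2 * M) * (g / M) = t * g + 2 * g := by field_simp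
    have h5 : (((M * (p₁ - 1) + 2 * M : ℕ)) : ℝ) = ((M * (p₁ - 1) : ℕ) : ℝ) + 2 * M := by push_cast; ring
    rw [h5]
    linarith

theorem card_tors_congr {α : Type} [Finite α] (p : ℕ) :
    Nat.card {τ : Equiv.Perm α // τ ^ p = 1} = torsCnt p (Nat.card α) := by
  have e : α ≃ Fin (Nat.card α) := Finite.equivFin α
  unfold torsCnt
  apply Nat.card_congr
  refine Equiv.subtypeEquiv e.permCongrHom.toEquiv ?_
  intro τ
  change τ ^ p = 1 ↔ (e.permCongrHom τ) ^ p = 1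
  rw [← map_pow, EmbeddingLike.map_eq_one_iff]

theorem torus_gen_pow (m : ℕ) (p : Fin m → ℕ) (i j : Fin m) :
    (PresentedGroup.of (rels := torusRels m p) i) ^ p i = (PresentedGroup.of (rels := torusRels m p) j) ^ p j := by
  have : PresentedGroup.mk (torusRels m p) (FreeGroup.of i ^ p i * (FreeGroup.of j ^ p j)⁻¹) = 1 := by
    apply (QuotientGroup.eq_one_iff _).mpr
    exact Subgroup.subset_normalClosure ⟨i, j, rfl⟩
  rw [map_mul, map_inv, mul_inv_eq_one, map_pow, map_pow] at this
  exact this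

/-- the action on `X` given by permutations of the right orders -/
noncomputable def torusHom (m : ℕ) (p : Fin m → ℕ) {X : Type} (σ : Fin m → Equiv.Perm X)
    (hσ : ∀ i, σ i ^ p i = 1) : TorusKnotGroup m p →* Equiv.Perm X :=
  PresentedGroup.toGroup (f := σ) (by
    rintro w ⟨i, j, rfl⟩
    simp [hσ])

theorem torusHom_of (m : ℕ) (p : Fin m → ℕ) {X : Type} (σ : Fin m → Equiv.Perm X)
    (hσ : ∀ i, σ i ^ p i = 1) (i : Fin m) : torusHom m p σ hσ (PresentedGroup.of i) = σ i := by
  simp [torusHom]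

/-- point stabilizer of a homomorphism to a permutation group -/
def stabSub {G X : Type*} [Group G] (φ : G →* Equiv.Perm X) (b : X) : Subgroup G where
  carrier := {g | φ g b = b}
  one_mem' := by simp
  mul_mem' := by
    intro a c ha hc
    change φ (a * c) b = b
    rw [map_mul, Equiv.Perm.mul_apply, show φ c b = b from hc]; exact ha
  inv_mem' := by
    intro a ha
    change φ a⁻¹ b = b
    rw [map_inv, Equiv.Perm.inv_eq_iff_eq]; exact (show φ a b = b from ha).symm

theorem mem_stabSub {G X : Type*} [Group G] (φ : G →* Equiv.Perm X) (b : X) (g : G) :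
    g ∈ stabSub φ b ↔ φ g b = b := Iff.rfl

theorem index_stabSub {G X : Type*} [Group G] (φ : G →* Equiv.Perm X) (b : X)
    (ht : ∀ v, ∃ g, φ g b = v) : (stabSub φ b).index = Nat.card X := by
  unfold Subgroup.index
  refine Nat.card_congr (Equiv.ofBijective
    (Quotient.lift (fun g => φ g b) ?_) ⟨?_, ?_⟩)
  · intro x y hxy
    have h1 : x⁻¹ * y ∈ stabSub φ b := QuotientGroup.leftRel_apply.1 hxy
    rw [mem_stabSub, map_mul, Equiv.Perm.mul_apply, map_inv, Equiv.Perm.inv_eq_iff_eq] at h1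
    exact h1.symm
  · intro x y
    induction x using Quotient.inductionOn
    induction y using Quotient.inductionOn
    rename_i x y
    intro h
    apply Quotient.sound
    apply QuotientGroup.leftRel_apply.2
    rw [mem_stabSub, map_mul, Equiv.Perm.mul_apply, map_inv, Equiv.Perm.inv_eq_iff_eq]
    exact h.symm
  · intro v
    obtain ⟨g, hg⟩ := ht v
    exact ⟨Quotient.mk _ g, hg⟩

section lower

variable {m : ℕ} {p : Fin m → ℕ} {X : Type} {i₁ i₂ : Fin m} {π ρ : Equiv.Perm X}

theorem backbone_rel {σ : Fin m → Equiv.Perm X} (F : X → Prop) (h1 : ∀ v, F (σ i₁ v) ↔ F v)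
    (hσ1 : ∀ v, π v ≠ v → σ i₁ v = π v) (v : X) : F (π v) ↔ F v := by
  by_cases hv : π v = v
  · rw [hv]
  · rw [← hσ1 v hv]; exact h1 v

theorem backbone_trans (hc : ConnPair π ρ) (σ : Fin m → Equiv.Perm X) (hσ : ∀ i, σ i ^ p i = 1)
    (hσ1 : ∀ v, π v ≠ v → σ i₁ v = π v) (hσ2 : σ i₂ = ρ) (b v : X) :
    ∃ g, torusHom m p σ hσ g b = v := by
  have key : ∀ i v, (∃ g, torusHom m p σ hσ g b = σ i v) ↔ ∃ g, torusHom m p σ hσ g b = v := by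
    intro i v
    constructor
    · rintro ⟨g, hg⟩
      refine ⟨(PresentedGroup.of i)⁻¹ * g, ?_⟩
      rw [map_mul, map_inv, torusHom_of, Equiv.Perm.mul_apply, hg]; simp
    · rintro ⟨g, hg⟩
      refine ⟨(PresentedGroup.of i) * g, ?_⟩
      rw [map_mul, torusHom_of, Equiv.Perm.mul_apply, hg]
  have := hc (fun v => ∃ g, torusHom m p σ hσ g b = v)
    (backbone_rel (σ := σ) (i₁ := i₁) (fun v => ∃ g, torusHom m p σ hσ g b = v) (key i₁) hσ1)
    (fun v => by rw [← hσ2]; exact key i₂ v) b v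
  exact this.1 ⟨1, by simp⟩

theorem backbone_inj (hc : ConnPair π ρ) (σ σ' : Fin m → Equiv.Perm X) (hσ : ∀ i, σ i ^ p i = 1)
    (hσ' : ∀ i, σ' i ^ p i = 1)
    (hσ1 : ∀ v, π v ≠ v → σ i₁ v = π v) (hσ2 : σ i₂ = ρ)
    (hσ1' : ∀ v, π v ≠ v → σ' i₁ v = π v) (hσ2' : σ' i₂ = ρ) (b : X)
    (hs : stabSub (torusHom m p σ hσ) b = stabSub (torusHom m p σ' hσ') b) : σ = σ' := by
  set φ := torusHom m p σ hσ with hφ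
  set φ' := torusHom m p σ' hσ' with hφ'
  have step : ∀ (ψ : TorusKnotGroup m p →* Equiv.Perm X) (i : Fin m) (g) (v : X),
      ψ g b = ψ (PresentedGroup.of i) v ↔ ψ ((PresentedGroup.of i)⁻¹ * g) b = v := by
    intro ψ i g v
    rw [map_mul, map_inv, Equiv.Perm.mul_apply, Equiv.Perm.inv_eq_iff_eq]
  have stepAll : ∀ (i : Fin m) (v : X), φ (PresentedGroup.of i) v = φ' (PresentedGroup.of i) v →
      ((∀ g, φ g b = φ (PresentedGroup.of i) v ↔ φ' g b = φ (PresentedGroup.of i) v) ↔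
        ∀ g, φ g b = v ↔ φ' g b = v) := by
    intro i v hv
    constructor
    · intro h g
      have := h (PresentedGroup.of i * g)
      rw [step φ, hv, step φ'] at this
      simpa using this
    · intro h g
      rw [step φ, hv, step φ']
      exact h _
  have hconst := hc (fun v => ∀ g, φ g b = v ↔ φ' g b = v)
    (by
      intro v
      by_cases hv : π v = v
      · rw [hv]
      · have e1 : φ (PresentedGroup.of i₁) v = π v := by rw [hφ, torusHom_of, hσ1 v hv]
        have e2 : φ' (PresentedGroup.of i₁) v = π v := by rw [hφ', torusHom_of, hσ1' v hv]
        have := stepAll i₁ v (e1.trans e2.symm)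
        rwa [e1] at this)
    (by
      intro v
      have e1 : φ (PresentedGroup.of i₂) v = ρ v := by rw [hφ, torusHom_of, hσ2]
      have e2 : φ' (PresentedGroup.of i₂) v = ρ v := by rw [hφ', torusHom_of, hσ2']
      have := stepAll i₂ v (e1.trans e2.symm)
      rwa [e1] at this)
  have hb : ∀ g, φ g b = b ↔ φ' g b = b := by
    intro g
    rw [← mem_stabSub, ← mem_stabSub, hs]
  have hall : ∀ g, φ' g b = φ g b := fun g => ((hconst b (φ g b)).1 hb g).1 rfl
  funext i
  ext1 v
  obtain ⟨h, hh⟩ := backbone_trans (p := p) hc σ hσ hσ1 hσ2 b v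
  have e1 := hall (PresentedGroup.of i * h)
  rw [map_mul, map_mul, Equiv.Perm.mul_apply, Equiv.Perm.mul_apply, hall h] at e1
  rw [← hφ] at hh
  rw [hh, hφ, hφ', torusHom_of, torusHom_of] at e1
  exact e1.symm

end lower

theorem lower_count {m : ℕ} {p : Fin m → ℕ} {i₁ i₂ : Fin m} (hne : i₁ ≠ i₂) {n f : ℕ} (hn : 0 < n)
    (hB : Backbone (p i₁) (p i₂) n f)
    (hfin : Finite {H : Subgroup (TorusKnotGroup m p) // H.index = n}) :
    torsCnt (p i₁) f * ∏ i : {i : Fin m // i ≠ i₁ ∧ i ≠ i₂}, torsCnt (p i) n ≤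
      Nat.card {H : Subgroup (TorusKnotGroup m p) // H.index = n ∧ (PresentedGroup.of i₁) ^ p i₁ ∈ H} := by
  classical
  obtain ⟨X, hX, π, ρ, rfl, hπ, hρ, hc, rfl⟩ := hB
  have hfin' : Finite {H : Subgroup (TorusKnotGroup m p) // H.index = Nat.card X ∧ (PresentedGroup.of i₁) ^ p i₁ ∈ H} :=
    Finite.of_injective (fun H => (⟨H.1, H.2.1⟩ : {H : Subgroup (TorusKnotGroup m p) // H.index = Nat.card X}))
      (fun a b h => Subtype.ext (congrArg (fun H => H.1) h))
  obtain ⟨⟨b⟩, -⟩ := Nat.card_pos_iff.1 hn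
  let D := {τ : Equiv.Perm {v // π v = v} // τ ^ p i₁ = 1} ×
    ((i : {i : Fin m // i ≠ i₁ ∧ i ≠ i₂}) → {τ : Equiv.Perm X // τ ^ p i = 1})
  have hD : Nat.card D = torsCnt (p i₁) {v | π v = v}.ncard *
      ∏ i : {i : Fin m // i ≠ i₁ ∧ i ≠ i₂}, torsCnt (p i) (Nat.card X) := by
    rw [Nat.card_prod, Nat.card_pi, card_tors_congr]
    congr 1
    apply Finset.prod_congr rfl
    intro i _
    exact card_tors_congr _
  rw [← hD]
  let sig : D → Fin m → Equiv.Perm X := fun d i =>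
    if i = i₁ then π * Equiv.Perm.ofSubtype d.1.1
    else if h2 : i = i₂ then ρ
    else if h1 : i = i₁ then 1 else (d.2 ⟨i, h1, h2⟩).1
  have sig1 : ∀ d, sig d i₁ = π * Equiv.Perm.ofSubtype d.1.1 := fun d => by simp [sig]
  have sig2 : ∀ d, sig d i₂ = ρ := fun d => by simp [sig, hne.symm]
  have sig3 : ∀ d (i : {i : Fin m // i ≠ i₁ ∧ i ≠ i₂}), sig d i = (d.2 i).1 := fun d i => by
    simp [sig, i.2.1, i.2.2]
  have hdisj : ∀ d : D, Equiv.Perm.Disjoint π (Equiv.Perm.ofSubtype d.1.1) := by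
    intro d v
    by_cases hv : π v = v
    · exact Or.inl hv
    · exact Or.inr (Equiv.Perm.ofSubtype_apply_of_not_mem _ hv)
  have sigpow : ∀ d i, sig d i ^ p i = 1 := by
    intro d i
    by_cases h1 : i = i₁
    · subst h1
      rw [sig1, (hdisj d).commute.mul_pow, hπ, ← map_pow, d.1.2, map_one, one_mul]
    by_cases h2 : i = i₂
    · subst h2; rw [sig2, hρ]
    · rw [sig3 d ⟨i, h1, h2⟩]; exact (d.2 ⟨i, h1, h2⟩).2
  have sigag : ∀ d v, π v ≠ v → sig d i₁ v = π v := by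
    intro d v hv
    rw [sig1, Equiv.Perm.mul_apply]
    exact congrArg π (Equiv.Perm.ofSubtype_apply_of_not_mem d.1.1 hv)
  let Ψ : D → {H : Subgroup (TorusKnotGroup m p) // H.index = Nat.card X ∧ (PresentedGroup.of i₁) ^ p i₁ ∈ H} :=
    fun d => ⟨stabSub (torusHom m p (sig d) (sigpow d)) b,
      index_stabSub _ _ (backbone_trans hc _ _ (sigag d) (sig2 d) b), by
        rw [mem_stabSub, map_pow, torusHom_of, sigpow]; rfl⟩
  apply Nat.card_le_card_of_injective Ψ
  intro d d' h
  have hs := backbone_inj hc _ _ (sigpow d) (sigpow d') (sigag d) (sig2 d) (sigag d') (sig2 d') b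
    (congrArg Subtype.val h)
  apply Prod.ext
  · apply Subtype.ext
    have h1 := congrFun hs i₁
    rw [sig1, sig1] at h1
    exact Equiv.Perm.ofSubtype_injective (mul_left_cancel h1)
  · funext i
    apply Subtype.ext
    rw [← sig3, ← sig3, hs]

/-- the labelled coset action -/
noncomputable def labHom {G Y : Type*} [Group G] (H : Subgroup G) (ε : G ⧸ H ≃ Y) : G →* Equiv.Perm Y :=
  (ε.permCongrHom).toMonoidHom.comp (MulAction.toPermHom G (G ⧸ H))

theorem labHom_apply {G Y : Type*} [Group G] (H : Subgroup G) (ε : G ⧸ H ≃ Y) (g : G) (q : G ⧸ H) :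
    labHom H ε g (ε q) = ε (g • q) := by
  simp [labHom, Equiv.permCongr_apply]

theorem labHom_base {G Y : Type*} [Group G] (H : Subgroup G) (ε : G ⧸ H ≃ Y) (g : G) :
    labHom H ε g (ε ((1 : G) : G ⧸ H)) = ε (g : G ⧸ H) := by
  rw [labHom_apply]
  congr 1
  change ((g * 1 : G) : G ⧸ H) = _
  rw [mul_one]

theorem labHom_stab {G Y : Type*} [Group G] (H : Subgroup G) (ε : G ⧸ H ≃ Y) :
    stabSub (labHom H ε) (ε ((1 : G) : G ⧸ H)) = H := by
  ext g
  rw [mem_stabSub, labHom_base, ε.apply_eq_iff_eq, eq_comm, QuotientGroup.eq]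
  simp

theorem lab_inj {G Y : Type*} [Group G] (H H' : Subgroup G) (ε : G ⧸ H ≃ Y) (ε' : G ⧸ H' ≃ Y)
    (h1 : labHom H ε = labHom H' ε') (h2 : ε ((1 : G) : G ⧸ H) = ε' ((1 : G) : G ⧸ H')) :
    H = H' ∧ HEq ε ε' := by
  have hH : H = H' := by
    rw [← labHom_stab H ε, ← labHom_stab H' ε', h1, h2]
  subst hH
  refine ⟨rfl, heq_of_eq ?_⟩
  ext q
  induction q using QuotientGroup.induction_on with
  | H g => exact (labHom_base H ε g).symm.trans (by rw [h1, h2, labHom_base])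

theorem equiv_quot_nonempty {G : Type*} [Group G] (H : Subgroup G) {n : ℕ} (hn : 0 < n) (h : H.index = n) :
    Nonempty (G ⧸ H ≃ Fin n) := by
  have hf : Finite (G ⧸ H) := by
    apply Nat.finite_of_card_ne_zero
    change H.index ≠ 0
    omega
  have : Nat.card (G ⧸ H) = n := h
  exact ⟨Finite.equivFinOfCardEq this⟩

theorem finite_index_subgroups (m : ℕ) (p : Fin m → ℕ) {n : ℕ} (hn : 0 < n) :
    Finite {H : Subgroup (TorusKnotGroup m p) // H.index = n} := by
  have hε : ∀ H : {H : Subgroup (TorusKnotGroup m p) // H.index = n},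
      Nonempty ((TorusKnotGroup m p) ⧸ H.1 ≃ Fin n) := fun H => equiv_quot_nonempty H.1 hn H.2
  apply Finite.of_injective (β := (Fin m → Equiv.Perm (Fin n)) × Fin n)
    (fun H => (fun i => labHom H.1 (hε H).some (PresentedGroup.of i), (hε H).some ((1 : TorusKnotGroup m p) : _ ⧸ H.1)))
  intro H H' h
  have h1 := congrArg Prod.fst h
  have h2 := congrArg Prod.snd h
  apply Subtype.ext
  refine (lab_inj H.1 H'.1 _ _ ?_ h2).1
  apply PresentedGroup.ext
  intro i
  exact congrFun h1 i

theorem torus_central (m : ℕ) (p : Fin m → ℕ) (i : Fin m) (g : TorusKnotGroup m p) :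
    Commute (PresentedGroup.of i ^ p i) g := by
  have : g ∈ Subgroup.centralizer {(PresentedGroup.of (rels := torusRels m p) i) ^ p i} := by
    have htop : (⊤ : Subgroup (TorusKnotGroup m p)) ≤
        Subgroup.centralizer {(PresentedGroup.of (rels := torusRels m p) i) ^ p i} := by
      rw [← PresentedGroup.closure_range_of, Subgroup.closure_le]
      rintro _ ⟨j, rfl⟩
      rw [SetLike.mem_coe, Subgroup.mem_centralizer_singleton_iff, torus_gen_pow m p i j]
      exact (Commute.self_pow _ _)
    exact htop trivial
  exact (Subgroup.mem_centralizer_singleton_iff.1 this).symm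

theorem upper_count (m : ℕ) (p : Fin m → ℕ) (i₀ : Fin m) {n : ℕ} (hn : 0 < n) :
    Nat.card {H : Subgroup (TorusKnotGroup m p) // H.index = n ∧ (PresentedGroup.of i₀) ^ p i₀ ∈ H} *
      n.factorial ≤ (∏ i, torsCnt (p i) n) * n := by
  classical
  have := finite_index_subgroups m p hn
  let A := {H : Subgroup (TorusKnotGroup m p) // H.index = n ∧ (PresentedGroup.of i₀) ^ p i₀ ∈ H}
  have hA : Finite A :=
    Finite.of_injective (fun H : A => (⟨H.1, H.2.1⟩ : {H : Subgroup (TorusKnotGroup m p) // H.index = n}))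
      (fun a b h => Subtype.ext (congrArg (fun H => H.1) h))
  have hfA : Fintype A := Fintype.ofFinite A
  have hne : ∀ H : A, Nonempty ((TorusKnotGroup m p) ⧸ H.1 ≃ Fin n) := fun H =>
    equiv_quot_nonempty H.1 hn H.2.1
  have hfin : ∀ H : A, Finite ((TorusKnotGroup m p) ⧸ H.1) := fun H =>
    Finite.of_equiv _ (hne H).some.symm
  have hcard : ∀ H : A, Nat.card ((TorusKnotGroup m p) ⧸ H.1 ≃ Fin n) = n.factorial := by
    intro H
    have e : ((TorusKnotGroup m p) ⧸ H.1 ≃ Fin n) ≃ Equiv.Perm (Fin n) :=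
      Equiv.equivCongr (hne H).some (Equiv.refl _)
    rw [Nat.card_congr e, Nat.card_eq_fintype_card, Fintype.card_perm, Fintype.card_fin]
  have hS : Nat.card (Σ H : A, ((TorusKnotGroup m p) ⧸ H.1 ≃ Fin n)) = Nat.card A * n.factorial := by
    rw [Nat.card_sigma, Finset.sum_congr rfl (fun H _ => hcard H)]
    simp [Nat.card_eq_fintype_card]
  have hT : Nat.card ((∀ i : Fin m, {τ : Equiv.Perm (Fin n) // τ ^ p i = 1}) × Fin n) =
      (∏ i, torsCnt (p i) n) * n := by
    rw [Nat.card_prod, Nat.card_pi, Nat.card_fin]; rfl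
  rw [← hS, ← hT]
  have hpow : ∀ (s : Σ H : A, ((TorusKnotGroup m p) ⧸ H.1 ≃ Fin n)) (i : Fin m),
      (labHom s.1.1 s.2 (PresentedGroup.of i)) ^ p i = 1 := by
    rintro ⟨H, ε⟩ i
    ext1 v
    obtain ⟨q, rfl⟩ := ε.surjective v
    rw [← map_pow, labHom_apply, Equiv.Perm.one_apply]
    congr 1
    induction q using QuotientGroup.induction_on with
    | H g =>
      change ((PresentedGroup.of i ^ p i * g : TorusKnotGroup m p) : _ ⧸ H.1) = _
      have hcomm : ∀ g : TorusKnotGroup m p, Commute (PresentedGroup.of i ^ p i) g := torus_central m p i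
      rw [(hcomm g).eq, eq_comm, QuotientGroup.eq]
      rw [inv_mul_cancel_left, torus_gen_pow m p i i₀]
      exact H.2.2
  apply Nat.card_le_card_of_injective (fun s : Σ H : A, ((TorusKnotGroup m p) ⧸ H.1 ≃ Fin n) =>
    ((fun i => ⟨labHom s.1.1 s.2 (PresentedGroup.of i), hpow s i⟩, s.2 ((1 : TorusKnotGroup m p) : _ ⧸ s.1.1)) :
      (∀ i : Fin m, {τ : Equiv.Perm (Fin n) // τ ^ p i = 1}) × Fin n))
  rintro ⟨⟨H, hH⟩, ε⟩ ⟨⟨H', hH'⟩, ε'⟩ h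
  have h1 := congrArg Prod.fst h
  have h2 := congrArg Prod.snd h
  obtain ⟨h3, h4⟩ := lab_inj H H' ε ε' (PresentedGroup.ext fun i =>
    congrArg Subtype.val (congrFun h1 i)) h2
  subst h3
  have := eq_of_heq h4
  subst this
  rfl

section bad

variable {G : Type*} [Group G] {z : G}

theorem mem_sup_zpowers (hz : ∀ g, Commute z g) (H : Subgroup G) (x : G) :
    x ∈ H ⊔ Subgroup.zpowers z ↔ ∃ h ∈ H, ∃ a : ℤ, h * z ^ a = x := by
  have hN : (Subgroup.zpowers z).Normal := by
    constructor
    rintro _ ⟨a, rfl⟩ g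
    have : g * z ^ a * g⁻¹ = z ^ a := by
      rw [← ((hz g).zpow_left a).eq, mul_inv_cancel_right]
    exact this ▸ ⟨a, rfl⟩
  rw [Subgroup.mem_sup_of_normal_right]
  constructor
  · rintro ⟨h, hh, _, ⟨a, rfl⟩, rfl⟩
    exact ⟨h, hh, a, rfl⟩
  · rintro ⟨h, hh, a, rfl⟩
    exact ⟨h, hh, _, ⟨a, rfl⟩, rfl⟩

theorem fibre_data (hz : ∀ g, Commute z g) (H K : Subgroup G) (hK : H ⊔ Subgroup.zpowers z = K) :
    (∀ a : ℤ, z ^ a ∈ H ↔ (H.relIndex K : ℤ) ∣ a) := by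
  have hHK : H ≤ K := hK ▸ le_sup_left
  have hzK : z ∈ K := hK ▸ (le_sup_right : _ ≤ H ⊔ Subgroup.zpowers z) (Subgroup.mem_zpowers z)
  have hN : (H.subgroupOf K).Normal := by
    constructor
    intro x hx g
    rw [Subgroup.mem_subgroupOf] at hx ⊢
    obtain ⟨h, hh, a, hg⟩ := (mem_sup_zpowers hz H g.1).1 (hK ▸ g.2)
    have : ((g * x * g⁻¹ : K) : G) = h * x.1 * h⁻¹ := by
      push_cast
      rw [← hg]
      have := ((hz x.1).zpow_left a).eq
      rw [mul_assoc h, this]; group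
    rw [this]
    exact H.mul_mem (H.mul_mem hh hx) (H.inv_mem hh)
  set zb : K ⧸ H.subgroupOf K := ((⟨z, hzK⟩ : K) : K ⧸ H.subgroupOf K) with hzb
  have hgen : ∀ q : K ⧸ H.subgroupOf K, q ∈ Subgroup.zpowers zb := by
    intro q
    induction q using QuotientGroup.induction_on with
    | H g =>
      obtain ⟨h, hh, a, hg⟩ := (mem_sup_zpowers hz H g.1).1 (hK ▸ g.2)
      refine ⟨a, ?_⟩
      change zb ^ a = _
      rw [hzb, ← QuotientGroup.mk_zpow, QuotientGroup.eq, Subgroup.mem_subgroupOf]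
      push_cast
      rw [← hg, ((hz h).zpow_left a).symm.eq, inv_mul_cancel_left]
      exact hh
  have hord : orderOf zb = H.relIndex K := orderOf_eq_card_of_forall_mem_zpowers hgen
  intro a
  rw [← hord, orderOf_dvd_iff_zpow_eq_one, hzb, ← QuotientGroup.mk_zpow, QuotientGroup.eq_one_iff,
    Subgroup.mem_subgroupOf]
  rfl

theorem fibre_code (hz : ∀ g, Commute z g) (H K : Subgroup G) (hK : H ⊔ Subgroup.zpowers z = K)
    (d : ℕ) (hd : 0 < d) (hHK : H.relIndex K = d) (t : G) (ht : t ∈ K) :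
    ∃ c : Fin d, t * (z ^ (c : ℕ))⁻¹ ∈ H := by
  obtain ⟨h, hh, a, rfl⟩ := (mem_sup_zpowers hz H t).1 (hK ▸ ht)
  have hd' : (0 : ℤ) < d := by exact_mod_cast hd
  have h0 := Int.emod_nonneg a hd'.ne'
  have h1 := Int.emod_lt_of_pos a hd'
  refine ⟨⟨(a % d).toNat, by omega⟩, ?_⟩
  rw [mul_assoc]
  apply H.mul_mem hh
  have e : z ^ (a % d).toNat = z ^ (a % d) := by
    rw [← zpow_natCast, Int.toNat_of_nonneg h0]
  dsimp only
  rw [e, ← zpow_neg, ← zpow_add, fibre_data hz H K hK, hHK]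
  exact ⟨a / d, by have := Int.emod_add_mul_ediv a d; linarith⟩

theorem fibre_inj_le (hz : ∀ g, Commute z g) (H₁ H₂ K : Subgroup G)
    (hK₁ : H₁ ⊔ Subgroup.zpowers z = K) (hK₂ : H₂ ⊔ Subgroup.zpowers z = K)
    (hd : H₁.relIndex K = H₂.relIndex K) (T : Finset K) (hT : Subgroup.closure (T : Set K) = ⊤)
    (hc : ∀ t ∈ T, ∃ c : ℕ, t.1 * (z ^ c)⁻¹ ∈ H₁ ∧ t.1 * (z ^ c)⁻¹ ∈ H₂) : H₁ ≤ H₂ := by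
  have hKle : K ≤ (H₁ ⊓ H₂) ⊔ Subgroup.zpowers z := by
    have h1 : (⊤ : Subgroup K) ≤ ((H₁ ⊓ H₂) ⊔ Subgroup.zpowers z).subgroupOf K := by
      rw [← hT, Subgroup.closure_le]
      intro t ht
      rw [SetLike.mem_coe, Subgroup.mem_subgroupOf, mem_sup_zpowers hz]
      obtain ⟨c, h1, h2⟩ := hc t ht
      exact ⟨_, ⟨h1, h2⟩, c, by rw [zpow_natCast, inv_mul_cancel_right]⟩
    intro k hk
    exact Subgroup.mem_subgroupOf.1 (h1 (Subgroup.mem_top (⟨k, hk⟩ : K)))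
  intro h hh
  have hhK : h ∈ K := hK₁ ▸ (le_sup_left : H₁ ≤ H₁ ⊔ Subgroup.zpowers z) hh
  obtain ⟨h0, ⟨h01, h02⟩, a, rfl⟩ := (mem_sup_zpowers hz _ _).1 (hKle hhK)
  have : z ^ a ∈ H₁ := (H₁.mul_mem_cancel_left h01).1 hh
  rw [fibre_data hz H₁ K hK₁, hd, ← fibre_data hz H₂ K hK₂] at this
  exact H₂.mul_mem h02 this

end bad

theorem bad_count (m : ℕ) (p : Fin m → ℕ) (i₀ : Fin m) {n : ℕ} (hn : 0 < n) :
    Nat.card {H : Subgroup (TorusKnotGroup m p) // H.index = n ∧ (PresentedGroup.of i₀) ^ p i₀ ∉ H} ≤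
      2 ^ (n * m) * ∑ e ∈ n.properDivisors,
        Nat.card {H : Subgroup (TorusKnotGroup m p) // H.index = e ∧ (PresentedGroup.of i₀) ^ p i₀ ∈ H} := by
  classical
  set z : TorusKnotGroup m p := (PresentedGroup.of i₀) ^ p i₀ with hzdef
  have hz : ∀ g, Commute z g := torus_central m p i₀
  have hfin : ∀ e, 0 < e → ∀ P : Subgroup (TorusKnotGroup m p) → Prop,
      {H : Subgroup (TorusKnotGroup m p) | H.index = e ∧ P H}.Finite := by
    intro e he P
    have h1 : Set.Finite {H : Subgroup (TorusKnotGroup m p) | H.index = e} := by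
      have : Finite ↥{H : Subgroup (TorusKnotGroup m p) | H.index = e} := finite_index_subgroups m p he
      exact Set.toFinite _
    exact h1.subset (fun H hH => hH.1)
  let s : Finset (Subgroup (TorusKnotGroup m p)) := (hfin n hn (fun H => z ∉ H)).toFinset
  let A : ℕ → Finset (Subgroup (TorusKnotGroup m p)) := fun e =>
    if he : 0 < e then (hfin e he (fun H => z ∈ H)).toFinset else ∅
  have hs : Nat.card {H : Subgroup (TorusKnotGroup m p) // H.index = n ∧ z ∉ H} = s.card := by
    have := Set.ncard_eq_toFinset_card _ (hfin n hn (fun H => z ∉ H))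
    exact this
  have hA : ∀ e, 0 < e → Nat.card {H : Subgroup (TorusKnotGroup m p) // H.index = e ∧ z ∈ H} = (A e).card := by
    intro e he
    have := Set.ncard_eq_toFinset_card _ (hfin e he (fun H => z ∈ H))
    simp only [A, dif_pos he]
    exact this
  have hsub : ∀ H : Subgroup (TorusKnotGroup m p), H.index = n → z ∉ H →
      (H ⊔ Subgroup.zpowers z).index ∈ n.properDivisors ∧
      0 < (H ⊔ Subgroup.zpowers z).index ∧
      H.relIndex (H ⊔ Subgroup.zpowers z) * (H ⊔ Subgroup.zpowers z).index = n := by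
    intro H hH hzH
    have h1 := Subgroup.relIndex_mul_index (le_sup_left : H ≤ H ⊔ Subgroup.zpowers z)
    rw [hH] at h1
    have hpos : 0 < (H ⊔ Subgroup.zpowers z).index := by
      rcases Nat.eq_zero_or_pos (H ⊔ Subgroup.zpowers z).index with h | h
      · rw [h] at h1; omega
      · exact h
    refine ⟨?_, hpos, h1⟩
    rw [Nat.mem_properDivisors]
    refine ⟨⟨_, by rw [mul_comm]; exact h1.symm⟩, ?_⟩
    have hne : H.relIndex (H ⊔ Subgroup.zpowers z) ≠ 1 := by
      rw [Ne, Subgroup.relIndex_eq_one]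
      intro hle
      exact hzH (hle ((le_sup_right : _ ≤ H ⊔ Subgroup.zpowers z) (Subgroup.mem_zpowers z)))
    have hne0 : H.relIndex (H ⊔ Subgroup.zpowers z) ≠ 0 := by
      intro h; rw [h] at h1; omega
    nlinarith [show 2 ≤ H.relIndex (H ⊔ Subgroup.zpowers z) by omega]
  have hmem_s : ∀ H, H ∈ s ↔ H.index = n ∧ z ∉ H := by intro H; simp [s]
  have key : s.card ≤ 2 ^ (n * m) * (n.properDivisors.biUnion A).card := by
    apply Finset.card_le_mul_card_image_of_maps_to (f := fun H => H ⊔ Subgroup.zpowers z)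
    · intro H hH
      rw [hmem_s] at hH
      obtain ⟨h1, h2, h3⟩ := hsub H hH.1 hH.2
      refine Finset.mem_biUnion.2 ⟨_, h1, ?_⟩
      simp only [A, dif_pos h2, Set.Finite.mem_toFinset, Set.mem_ofPred_eq]
      exact ⟨trivial, (le_sup_right : _ ≤ H ⊔ Subgroup.zpowers z) (Subgroup.mem_zpowers z)⟩
    · intro K hK
      obtain ⟨e, he, hKe⟩ := Finset.mem_biUnion.1 hK
      have he0 : 0 < e := Nat.pos_of_mem_properDivisors he
      simp only [A, dif_pos he0, Set.Finite.mem_toFinset, Set.mem_ofPred_eq] at hKe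
      obtain ⟨hKi, hzK⟩ := hKe
      obtain ⟨d, hd⟩ := (Nat.mem_properDivisors.1 he).1
      have hd0 : 0 < d := by
        rcases Nat.eq_zero_or_pos d with h | h
        · rw [h] at hd; omega
        · exact h
      have : K.FiniteIndex := ⟨by omega⟩
      obtain ⟨T, hTc, hT⟩ := Subgroup.exists_finset_card_le_mul K
        (S := Finset.univ.image (PresentedGroup.of (rels := torusRels m p))) (by
          rw [Finset.coe_image, Finset.coe_univ, Set.image_univ]
          exact PresentedGroup.closure_range_of _)
      have hTc' : T.card ≤ e * m := by
        refine hTc.trans ?_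
        rw [hKi]
        gcongr
        refine Finset.card_image_le.trans ?_
        simp
      have hrel : ∀ H, H ∈ s.filter (fun H => H ⊔ Subgroup.zpowers z = K) →
          H ⊔ Subgroup.zpowers z = K ∧ H.relIndex K = d := by
        intro H hH
        rw [Finset.mem_filter, hmem_s] at hH
        refine ⟨hH.2, ?_⟩
        have := (hsub H hH.1.1 hH.1.2).2.2
        rw [hH.2, hKi, hd, mul_comm] at this
        exact Nat.eq_of_mul_eq_mul_left he0 this
      have hcode : ∀ H : Subgroup (TorusKnotGroup m p), ∃ c : T → Fin d,
          H ∈ s.filter (fun H => H ⊔ Subgroup.zpowers z = K) →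
          ∀ t : T, t.1.1 * (z ^ (c t : ℕ))⁻¹ ∈ H := by
        intro H
        by_cases hH : H ∈ s.filter (fun H => H ⊔ Subgroup.zpowers z = K)
        · choose c hc using fun t : T => fibre_code hz H K (hrel H hH).1 d hd0 (hrel H hH).2 t.1.1 t.1.2
          exact ⟨c, fun _ => hc⟩
        · exact ⟨fun _ => ⟨0, hd0⟩, fun h => absurd h hH⟩
      choose code hcode using hcode
      calc (s.filter (fun H => H ⊔ Subgroup.zpowers z = K)).card
          ≤ (Finset.univ : Finset (T → Fin d)).card := by
            apply Finset.card_le_card_of_injOn code (by simp)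
            intro H hH H' hH' hcc
            obtain ⟨a1, a2⟩ := hrel H hH
            obtain ⟨b1, b2⟩ := hrel H' hH'
            apply le_antisymm
            · apply fibre_inj_le hz H H' K a1 b1 (a2.trans b2.symm) T hT
              intro t ht
              refine ⟨code H ⟨t, ht⟩, hcode H hH ⟨t, ht⟩, ?_⟩
              rw [hcc]; exact hcode H' hH' ⟨t, ht⟩
            · apply fibre_inj_le hz H' H K b1 a1 (b2.trans a2.symm) T hT
              intro t ht
              refine ⟨code H ⟨t, ht⟩, ?_, hcode H hH ⟨t, ht⟩⟩
              rw [hcc]; exact hcode H' hH' ⟨t, ht⟩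
        _ = d ^ T.card := by simp
        _ ≤ d ^ (e * m) := Nat.pow_le_pow_right hd0 hTc'
        _ ≤ (2 ^ d) ^ (e * m) := Nat.pow_le_pow_left (Nat.lt_two_pow_self).le _
        _ = 2 ^ (n * m) := by rw [← pow_mul, hd]; ring_nf
  rw [hs]
  refine key.trans ?_
  gcongr
  refine Finset.card_biUnion_le.trans (Finset.sum_le_sum fun e he => ?_)
  rw [hA e (Nat.pos_of_mem_properDivisors he)]

theorem log_factorial_ge (k : ℕ) : (k : ℝ) * Real.log k - k ≤ Real.log (k.factorial : ℝ) := by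
  rcases Nat.eq_zero_or_pos k with rfl | hk
  · simp
  have hk' : (0 : ℝ) < k := by exact_mod_cast hk
  have h := Real.pow_div_factorial_le_exp (k : ℝ) hk'.le k
  have h2 := Real.log_le_log (by positivity) h
  rw [Real.log_div (by positivity) (by positivity), Real.log_pow, Real.log_exp] at h2
  linarith

theorem torsCnt_pos (p k : ℕ) : 0 < torsCnt p k := by
  unfold torsCnt
  have : Nonempty {τ : Equiv.Perm (Fin k) // τ ^ p = 1} := ⟨⟨1, one_pow _⟩⟩
  exact Nat.card_pos

theorem log_torsCnt_le (p k : ℕ) (hp : 2 ≤ p) :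
    Real.log (torsCnt p k) ≤ k * Real.log 2 + (1 - 1 / (p : ℝ)) * (k * Real.log k) := by
  have h0 : (0 : ℝ) < torsCnt p k := by exact_mod_cast torsCnt_pos p k
  have h := torsCnt_le p k (by omega)
  have hp0 : (0 : ℝ) < p := by positivity
  rcases Nat.eq_zero_or_pos k with rfl | hk
  · simp at h
    have : torsCnt p 0 = 1 := le_antisymm h (torsCnt_pos p 0)
    simp [this]
  have hk' : (0 : ℝ) < k := by exact_mod_cast hk
  have hk1 : (1 : ℝ) ≤ k := by exact_mod_cast hk
  have h' : (torsCnt p k : ℝ) ≤ (k : ℝ) ^ (k - (k + p - 1) / p) * 2 ^ k := by exact_mod_cast h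
  have h2 := Real.log_le_log h0 h'
  rw [Real.log_mul (by positivity) (by positivity), Real.log_pow, Real.log_pow] at h2
  set r := (k + p - 1) / p with hr
  have hrk : r ≤ k := by
    rw [hr]
    apply Nat.le_of_lt_succ
    rw [Nat.div_lt_iff_lt_mul (by omega)]
    have : k * 1 ≤ k * p := Nat.mul_le_mul_left _ (by omega)
    rw [Nat.succ_mul]; omega
  have hr2 : k ≤ p * r := by
    have h1 := Nat.div_add_mod (k + p - 1) p
    have h2 := Nat.mod_lt (k + p - 1) (show 0 < p by omega)
    rw [← hr] at h1
    omega
  have hr2' : (k : ℝ) ≤ p * r := by exact_mod_cast hr2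
  have hr3 : (k : ℝ) / p ≤ r := by rw [div_le_iff₀ hp0]; linarith
  rw [Nat.cast_sub hrk] at h2
  have hlog : 0 ≤ Real.log k := Real.log_nonneg hk1
  have : ((k : ℝ) - r) * Real.log k ≤ (k - k / p) * Real.log k := by gcongr
  have e : (1 - 1 / (p : ℝ)) * (k * Real.log k) = (k - k / p) * Real.log k := by ring
  rw [e]; linarith

theorem log_torsCnt_ge (p k : ℕ) (hp : 2 ≤ p) :
    (1 - 1 / (p : ℝ)) * (k * Real.log k) - (1 + Real.log p) * k - Real.log (p.factorial : ℝ)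
      ≤ Real.log (torsCnt p k) := by
  have h := torsCnt_ge p k hp
  have hp0 : (0 : ℝ) < p := by positivity
  have h2 := Real.log_le_log (by positivity) h
  rw [Real.log_div (by positivity) (by positivity), Real.log_mul (by positivity) (by positivity),
    Real.log_mul (by positivity) (by positivity), Real.log_pow] at h2
  have h3 := log_factorial_ge k
  have h4 : Real.log ((k / p).factorial : ℝ) ≤ (k : ℝ) / p * Real.log k := by
    rcases Nat.eq_zero_or_pos k with rfl | hk
    · simp
    have hk1 : (1 : ℝ) ≤ k := by exact_mod_cast hk
    have a1 : ((k / p).factorial : ℝ) ≤ (k : ℝ) ^ (k / p) := by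
      have : (k / p).factorial ≤ k ^ (k / p) :=
        (Nat.factorial_le_pow (k / p)).trans (Nat.pow_le_pow_left (Nat.div_le_self _ _) _)
      exact_mod_cast this
    have a2 := Real.log_le_log (by positivity) a1
    rw [Real.log_pow] at a2
    refine a2.trans ?_
    have hlog : 0 ≤ Real.log k := Real.log_nonneg hk1
    gcongr
    exact Nat.cast_div_le
  have e : (1 - 1 / (p : ℝ)) * (k * Real.log k) = k * Real.log k - k / p * Real.log k := by ring
  rw [e]; linarith

theorem mul_log_ge (f n : ℕ) (hn : 0 < n) :
    (f : ℝ) * Real.log n - n ≤ f * Real.log f := by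
  rcases Nat.eq_zero_or_pos f with rfl | hf
  · simp
  have hf' : (0 : ℝ) < f := by exact_mod_cast hf
  have hn' : (0 : ℝ) < n := by exact_mod_cast hn
  have h := Real.log_le_sub_one_of_pos (show (0 : ℝ) < n / f by positivity)
  rw [Real.log_div hn'.ne' hf'.ne'] at h
  have h2 := mul_le_mul_of_nonneg_left h hf'.le
  have : (f : ℝ) * (n / f - 1) = n - f := by field_simp
  rw [this] at h2
  nlinarith

theorem lower_arith (a b c n f l lf E E' Q lp lfac X Y : ℝ)
    (h1 : a * (f * lf) - (1 + lp) * f - lfac ≤ X)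
    (h2 : a * (f * l - n) ≤ a * (f * lf))
    (h3 : n * b * l ≤ a * (f + c) * l)
    (h4 : a * (c * l) ≤ c * n) (h5 : a * n ≤ n)
    (h6 : (1 + lp) * f ≤ (1 + lp) * n) (h7 : lfac ≤ lfac * n) (h8 : E' ≤ E' * n)
    (hsum : Q * (n * l) - E * n - E' ≤ Y) :
    (b + Q) * (n * l) - (c + 1 + (1 + lp) + lfac + E + E') * n ≤ X + Y := by
  have e1 : a * (f * l - n) = a * f * l - a * n := by ring
  have e2 : a * (f + c) * l = a * f * l + a * (c * l) := by ring
  have e3 : (b + Q) * (n * l) - (c + 1 + (1 + lp) + lfac + E + E') * n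
      = n * b * l + Q * (n * l) - c * n - n - (1 + lp) * n - lfac * n - E * n - E' * n := by ring
  rw [e3]
  rw [e1] at h2
  rw [e2] at h3
  linarith

set_option maxHeartbeats 1000000 in
theorem lowerA {m : ℕ} {p : Fin m → ℕ} (hp : ∀ i, 2 ≤ p i) {i₁ i₂ : Fin m} (hne : i₁ ≠ i₂) :
    ∃ (C : ℝ) (N : ℕ), ∀ n : ℕ, N ≤ n →
      Real.exp (((m : ℝ) - 1 - ∑ i, (1 : ℝ) / (p i : ℝ)) * (n * Real.log n) - C * n) ≤
      Nat.card {H : Subgroup (TorusKnotGroup m p) // H.index = n ∧ (PresentedGroup.of i₁) ^ p i₁ ∈ H} := by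
  classical
  obtain ⟨c, N, hB⟩ := backbone_exists (hp i₁) (hp i₂)
  let S := {i : Fin m // i ≠ i₁ ∧ i ≠ i₂}
  set E : ℝ := ∑ i : S, (1 + Real.log (p i)) with hE
  set E' : ℝ := ∑ i : S, Real.log ((p i).factorial : ℝ) with hE'
  refine ⟨c + 1 + (1 + Real.log (p i₁)) + Real.log ((p i₁).factorial : ℝ) + E + E', N + 1, fun n hn => ?_⟩
  have hn0 : 0 < n := by omega
  have hn1 : (1 : ℝ) ≤ n := by exact_mod_cast hn0
  obtain ⟨f, hfn, hBf, hfr⟩ := hB n (by omega)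
  have hcount := lower_count hne hn0 hBf (finite_index_subgroups m p hn0)
  have hcount' : ((torsCnt (p i₁) f : ℝ) * ∏ i : S, (torsCnt (p i) n : ℝ)) ≤
      Nat.card {H : Subgroup (TorusKnotGroup m p) // H.index = n ∧ (PresentedGroup.of i₁) ^ p i₁ ∈ H} := by
    exact_mod_cast hcount
  refine le_trans ?_ hcount'
  have hpos1 : (0 : ℝ) < torsCnt (p i₁) f := by exact_mod_cast torsCnt_pos _ _
  have hpos2 : ∀ i : S, (0 : ℝ) < torsCnt (p i) n := fun i => by exact_mod_cast torsCnt_pos _ _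
  have hpos3 : 0 < ∏ i : S, (torsCnt (p i) n : ℝ) := Finset.prod_pos fun i _ => hpos2 i
  rw [← Real.le_log_iff_exp_le (mul_pos hpos1 hpos3), Real.log_mul hpos1.ne' hpos3.ne',
    Real.log_prod (fun i _ => (hpos2 i).ne')]
  have hfn' : (f : ℝ) ≤ n := by exact_mod_cast hfn
  have hlog : 0 ≤ Real.log n := Real.log_nonneg hn1
  have hlogn : Real.log n ≤ n := (Real.log_le_sub_one_of_pos (by linarith)).trans (by linarith)
  have hp1r : (2 : ℝ) ≤ p i₁ := by exact_mod_cast hp i₁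
  have hq0 : (0 : ℝ) ≤ 1 - 1 / (p i₁ : ℝ) := by
    rw [sub_nonneg, div_le_one (by linarith)]; linarith
  have hq1 : 1 - 1 / (p i₁ : ℝ) ≤ 1 := by
    have : (0 : ℝ) ≤ 1 / (p i₁ : ℝ) := by positivity
    linarith
  -- sum of the others
  have hsum : (∑ i : S, (1 - 1 / (p i : ℝ))) * (n * Real.log n) - E * n - E' ≤
      ∑ i : S, Real.log (torsCnt (p i) n : ℝ) := by
    rw [hE, hE', Finset.sum_mul, Finset.sum_mul, ← Finset.sum_sub_distrib, ← Finset.sum_sub_distrib]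
    exact Finset.sum_le_sum fun i _ => log_torsCnt_ge (p i) n (hp i)
  -- first factor
  have h1 := log_torsCnt_ge (p i₁) f (hp i₁)
  have h2 := mul_le_mul_of_nonneg_left (mul_log_ge f n hn0) hq0
  have h3 := mul_le_mul_of_nonneg_right hfr hlog
  have h4 : (1 - 1 / (p i₁ : ℝ)) * (c * Real.log n) ≤ c * n := by
    have : (0 : ℝ) ≤ c * Real.log n := by positivity
    calc (1 - 1 / (p i₁ : ℝ)) * (c * Real.log n) ≤ 1 * (c * Real.log n) := by gcongr
      _ ≤ c * n := by rw [one_mul]; gcongr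
  have h5 : (1 - 1 / (p i₁ : ℝ)) * n ≤ n := by nlinarith
  have hl1 : 0 ≤ Real.log (p i₁) := Real.log_nonneg (by linarith)
  have h6 : (1 + Real.log (p i₁)) * f ≤ (1 + Real.log (p i₁)) * n := by gcongr
  have hlf : 0 ≤ Real.log ((p i₁).factorial : ℝ) := Real.log_natCast_nonneg _
  have h7 : Real.log ((p i₁).factorial : ℝ) ≤ Real.log ((p i₁).factorial : ℝ) * n := by nlinarith
  have hE'0 : 0 ≤ E' := Finset.sum_nonneg fun i _ => Real.log_natCast_nonneg _
  have h8 : E' ≤ E' * n := by nlinarith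
  have hbr : ((m : ℝ) - 1 - ∑ i, (1 : ℝ) / (p i : ℝ)) =
      (1 - 1 / (p i₁ : ℝ) - 1 / (p i₂ : ℝ)) + ∑ i : S, (1 - 1 / (p i : ℝ)) := by
    have e1 : ∑ i : S, (1 - 1 / (p i : ℝ)) = ∑ i ∈ (Finset.univ.erase i₁).erase i₂, (1 - 1 / (p i : ℝ)) := by
      symm
      apply Finset.sum_subtype
      intro i
      simp [and_comm]
    have e2 := Finset.add_sum_erase (Finset.univ.erase i₁) (fun i => (1 - 1 / (p i : ℝ)))
      (Finset.mem_erase.2 ⟨hne.symm, Finset.mem_univ i₂⟩)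
    have e3 := Finset.add_sum_erase Finset.univ (fun i => (1 - 1 / (p i : ℝ))) (Finset.mem_univ i₁)
    have e4 : ∑ i, (1 - 1 / (p i : ℝ)) = m - ∑ i, (1 : ℝ) / (p i : ℝ) := by
      rw [Finset.sum_sub_distrib]; simp
    rw [e1]; linarith
  rw [hbr]
  exact lower_arith _ _ _ _ _ _ _ _ _ _ _ _ _ _ h1 h2 h3 h4 h5 h6 h7 h8 hsum

theorem upperA {m : ℕ} {p : Fin m → ℕ} (hp : ∀ i, 2 ≤ p i) (i₀ : Fin m) (n : ℕ) (hn : 0 < n) :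
    (Nat.card {H : Subgroup (TorusKnotGroup m p) // H.index = n ∧ (PresentedGroup.of i₀) ^ p i₀ ∈ H} : ℝ) ≤
      Real.exp (((m : ℝ) - 1 - ∑ i, (1 : ℝ) / (p i : ℝ)) * (n * Real.log n) + (m * Real.log 2 + 2) * n) := by
  have hn1 : (1 : ℝ) ≤ n := by exact_mod_cast hn
  have h := upper_count m p i₀ hn
  set a := Nat.card {H : Subgroup (TorusKnotGroup m p) // H.index = n ∧ (PresentedGroup.of i₀) ^ p i₀ ∈ H}
  have h' : (a : ℝ) * (n.factorial : ℝ) ≤ (∏ i, (torsCnt (p i) n : ℝ)) * n := by exact_mod_cast h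
  rcases Nat.eq_zero_or_pos a with h0 | h0
  · rw [h0]; simp only [Nat.cast_zero]; positivity
  have ha : (0 : ℝ) < a := by exact_mod_cast h0
  rw [← Real.log_le_iff_le_exp ha]
  have hpos2 : ∀ i, (0 : ℝ) < torsCnt (p i) n := fun i => by exact_mod_cast torsCnt_pos _ _
  have hpos3 : 0 < ∏ i, (torsCnt (p i) n : ℝ) := Finset.prod_pos fun i _ => hpos2 i
  have h2 := Real.log_le_log (by positivity) h'
  rw [Real.log_mul ha.ne' (by positivity), Real.log_mul hpos3.ne' (by positivity),
    Real.log_prod (fun i _ => (hpos2 i).ne')] at h2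
  have hlogn : Real.log n ≤ n := (Real.log_le_sub_one_of_pos (by linarith)).trans (by linarith)
  have h3 := log_factorial_ge n
  have h4 : ∑ i, Real.log (torsCnt (p i) n : ℝ) ≤
      ∑ i, (n * Real.log 2 + (1 - 1 / (p i : ℝ)) * (n * Real.log n)) :=
    Finset.sum_le_sum fun i _ => log_torsCnt_le (p i) n (hp i)
  have e4 : ∑ i, ((n : ℝ) * Real.log 2 + (1 - 1 / (p i : ℝ)) * (n * Real.log n)) =
      m * (n * Real.log 2) + (m - ∑ i, (1 : ℝ) / (p i : ℝ)) * (n * Real.log n) := by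
    have e5 : ∑ i, (1 - 1 / (p i : ℝ)) = m - ∑ i, (1 : ℝ) / (p i : ℝ) := by
      rw [Finset.sum_sub_distrib]; simp
    rw [Finset.sum_add_distrib, ← e5, Finset.sum_mul]
    simp
  rw [e4] at h4
  have e6 : ((m : ℝ) - 1 - ∑ i, (1 : ℝ) / (p i : ℝ)) * (n * Real.log n) + (m * Real.log 2 + 2) * n =
      (m - ∑ i, (1 : ℝ) / (p i : ℝ)) * (n * Real.log n) - n * Real.log n + m * (n * Real.log 2)
        + 2 * n := by ring
  rw [e6]
  linarith

theorem upperB {m : ℕ} {p : Fin m → ℕ} (hp : ∀ i, 2 ≤ p i)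
    (h : ∑ i, (1 : ℝ) / (p i : ℝ) < (m : ℝ) - 1) (i₀ : Fin m) (n : ℕ) (hn : 0 < n) :
    (Nat.card {H : Subgroup (TorusKnotGroup m p) // H.index = n ∧ (PresentedGroup.of i₀) ^ p i₀ ∉ H} : ℝ) ≤
      Real.exp (((m : ℝ) - 1 - ∑ i, (1 : ℝ) / (p i : ℝ)) / 2 * (n * Real.log n) + (2 * m * Real.log 2 + 3) * n) := by
  have hn1 : (1 : ℝ) ≤ n := by exact_mod_cast hn
  set δ := (m : ℝ) - 1 - ∑ i, (1 : ℝ) / (p i : ℝ) with hδ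
  have hδ0 : 0 < δ := by rw [hδ]; linarith
  have hl2 : 0 < Real.log 2 := Real.log_pos (by norm_num)
  have hb := bad_count m p i₀ hn
  have hb' : (Nat.card {H : Subgroup (TorusKnotGroup m p) // H.index = n ∧ (PresentedGroup.of i₀) ^ p i₀ ∉ H} : ℝ) ≤
    2 ^ (n * m) * ∑ e ∈ n.properDivisors,
        (Nat.card {H : Subgroup (TorusKnotGroup m p) // H.index = e ∧ (PresentedGroup.of i₀) ^ p i₀ ∈ H} : ℝ) := by
    exact_mod_cast hb
  refine hb'.trans ?_
  have hterm : ∀ e ∈ n.properDivisors,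
      (Nat.card {H : Subgroup (TorusKnotGroup m p) // H.index = e ∧ (PresentedGroup.of i₀) ^ p i₀ ∈ H} : ℝ) ≤
      Real.exp (δ / 2 * (n * Real.log n) + (m * Real.log 2 + 2) * n) := by
    intro e he
    have he0 : 0 < e := Nat.pos_of_mem_properDivisors he
    obtain ⟨⟨d, hd⟩, hlt⟩ := Nat.mem_properDivisors.1 he
    have h2e : 2 * e ≤ n := by
      have : 2 ≤ d := by
        by_contra hcon
        have : d ≤ 1 := by omega
        have : e * d ≤ e * 1 := Nat.mul_le_mul_left _ this
        omega
      rw [hd, mul_comm]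
      exact Nat.mul_le_mul_left _ this
    refine (upperA hp i₀ e he0).trans ?_
    rw [← hδ]
    apply Real.exp_le_exp.2
    have he1 : (1 : ℝ) ≤ e := by exact_mod_cast he0
    have h2e' : (2 : ℝ) * e ≤ n := by exact_mod_cast h2e
    have hle : Real.log e ≤ Real.log n := Real.log_le_log (by linarith) (by linarith)
    have hle0 : 0 ≤ Real.log e := Real.log_nonneg he1
    have a1 : (e : ℝ) * Real.log e ≤ n / 2 * Real.log n := by
      apply mul_le_mul _ hle hle0 (by positivity)
      linarith
    have a2 := mul_le_mul_of_nonneg_left a1 hδ0.le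
    have a3 : (m * Real.log 2 + 2) * (e : ℝ) ≤ (m * Real.log 2 + 2) * n := by
      gcongr
    linarith
  have hsum := Finset.sum_le_card_nsmul _ _ _ hterm
  have hcard : (n.properDivisors.card : ℝ) ≤ Real.exp n := by
    have h1 : n.properDivisors.card ≤ n := by
      refine (Finset.card_le_card (Finset.filter_subset _ _)).trans ?_
      simp
    have h2 : (n.properDivisors.card : ℝ) ≤ n := by exact_mod_cast h1
    have := Real.add_one_le_exp (n : ℝ)
    linarith
  have h2pow : (2 : ℝ) ^ (n * m) = Real.exp ((n : ℝ) * m * Real.log 2) := by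
    rw [← Real.exp_log (show (0 : ℝ) < 2 ^ (n * m) by positivity), Real.log_pow]
    push_cast; rfl
  calc 2 ^ (n * m) * ∑ e ∈ n.properDivisors, _
      ≤ Real.exp ((n : ℝ) * m * Real.log 2) * (Real.exp n *
        Real.exp (δ / 2 * (n * Real.log n) + (m * Real.log 2 + 2) * n)) := by
        rw [h2pow]
        apply mul_le_mul_of_nonneg_left _ (Real.exp_pos _).le
        refine hsum.trans ?_
        rw [nsmul_eq_mul]
        exact mul_le_mul_of_nonneg_right hcard (Real.exp_pos _).le
    _ = _ := by
        rw [← Real.exp_add, ← Real.exp_add]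
        congr 1
        ring

theorem ker_le_zpowers (m : ℕ) (p : Fin m → ℕ) (i₀ : Fin m) :
    (PhiMap m p).ker ≤ Subgroup.zpowers ((PresentedGroup.of i₀) ^ p i₀) := by
  set z : TorusKnotGroup m p := (PresentedGroup.of i₀) ^ p i₀ with hzdef
  have hz : ∀ g, Commute z g := torus_central m p i₀
  have hN : (Subgroup.zpowers z).Normal := by
    constructor
    rintro _ ⟨a, rfl⟩ g
    have : g * z ^ a * g⁻¹ = z ^ a := by
      rw [← ((hz g).zpow_left a).eq, mul_inv_cancel_right]
    exact this ▸ ⟨a, rfl⟩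
  let Θ : CyclicFreeProduct m p →* (TorusKnotGroup m p) ⧸ Subgroup.zpowers z :=
    PresentedGroup.toGroup (f := fun i => ((PresentedGroup.of i : TorusKnotGroup m p) : _ ⧸ Subgroup.zpowers z)) (by
      rintro w ⟨i, rfl⟩
      simp only [map_pow, FreeGroup.lift_apply_of]
      rw [← QuotientGroup.mk_pow, QuotientGroup.eq_one_iff, torus_gen_pow m p i i₀]
      exact Subgroup.mem_zpowers z)
  have hcomp : Θ.comp (PhiMap m p) = QuotientGroup.mk' (Subgroup.zpowers z) := by
    apply PresentedGroup.ext
    intro i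
    simp [Θ, PhiMap]
  intro g hg
  have : Θ.comp (PhiMap m p) g = 1 := by
    rw [MonoidHom.comp_apply, MonoidHom.mem_ker.1 hg, map_one]
  rw [hcomp] at this
  exact (QuotientGroup.eq_one_iff g).1 this

theorem fixed_of_mem {m : ℕ} {p : Fin m → ℕ} (i₀ : Fin m) (g : TorusKnotGroup m p)
    (hgL : g ∈ (PhiMap m p).ker) (H : Subgroup (TorusKnotGroup m p))
    (hH : (PresentedGroup.of i₀) ^ p i₀ ∈ H) : fixedCosetCount g H = H.index := by
  obtain ⟨a, ha⟩ := ker_le_zpowers m p i₀ hgL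
  have hgH : g ∈ H := ha ▸ H.zpow_mem hH a
  have hall : ∀ x : (TorusKnotGroup m p) ⧸ H, g • x = x := by
    intro x
    induction x using QuotientGroup.induction_on with
    | H y =>
      change ((g * y : TorusKnotGroup m p) : _ ⧸ H) = _
      have hc : Commute g y := ha ▸ (torus_central m p i₀ y).zpow_left a
      rw [hc.eq, eq_comm, QuotientGroup.eq, inv_mul_cancel_left]
      exact hgH
  unfold fixedCosetCount Subgroup.index
  exact Nat.card_congr (Equiv.subtypeUnivEquiv hall)

theorem central_class_lifts_fully (m : ℕ) (p : Fin m → ℕ) (hp : ∀ i, 2 ≤ p i)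
    (h : ∑ i, (1 : ℝ) / (p i : ℝ) < (m : ℝ) - 1)
    (g : TorusKnotGroup m p) (hg : g ≠ 1) (hgL : g ∈ (PhiMap m p).ker) :
    Filter.Tendsto (fun n : ℕ =>
      subgroupProb (TorusKnotGroup m p) n (fun H => fixedCosetCount g H = n))
      Filter.atTop (𝓝 1) := by
  have hm : 2 ≤ m := by
    have h0 : (0 : ℝ) ≤ ∑ i, (1 : ℝ) / (p i : ℝ) := Finset.sum_nonneg fun i _ => by positivity
    have h1 : (1 : ℝ) < m := by linarith
    have : 1 < m := by exact_mod_cast h1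
    omega
  let i₁ : Fin m := ⟨0, by omega⟩
  let i₂ : Fin m := ⟨1, by omega⟩
  have hne : i₁ ≠ i₂ := by simp [i₁, i₂]
  set δ := (m : ℝ) - 1 - ∑ i, (1 : ℝ) / (p i : ℝ) with hδ
  have hδ0 : 0 < δ := by rw [hδ]; linarith
  obtain ⟨C, N, hlow⟩ := lowerA hp hne
  set C' := C + (2 * m * Real.log 2 + 3) with hC'
  have hlim : Filter.Tendsto (fun n : ℕ => 1 - Real.exp (-((n : ℝ) * (δ / 2 * Real.log n - C'))))
      Filter.atTop (𝓝 1) := by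
    have h1 : Filter.Tendsto (fun n : ℕ => δ / 2 * Real.log n - C') Filter.atTop Filter.atTop := by
      apply Filter.tendsto_atTop_add_const_right
      exact (Real.tendsto_log_atTop.comp tendsto_natCast_atTop_atTop).const_mul_atTop (by linarith)
    have h2 := (tendsto_natCast_atTop_atTop (R := ℝ)).atTop_mul_atTop₀ h1
    have h3 := Real.tendsto_exp_neg_atTop_nhds_zero.comp h2
    have h4 := h3.const_sub 1
    simpa using h4
  refine tendsto_of_tendsto_of_tendsto_of_le_of_le' hlim tendsto_const_nhds ?_ ?_
  · filter_upwards [Filter.eventually_ge_atTop (N + 1)] with n hn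
    have hn0 : 0 < n := by omega
    have hA := hlow n (by omega)
    have hBd := upperB hp h i₁ n hn0
    rw [← hδ] at hA hBd
    have hfin : ∀ P : Subgroup (TorusKnotGroup m p) → Prop,
        {H : Subgroup (TorusKnotGroup m p) | H.index = n ∧ P H}.Finite := by
      intro P
      have h1 : Set.Finite {H : Subgroup (TorusKnotGroup m p) | H.index = n} := by
        have : Finite ↥{H : Subgroup (TorusKnotGroup m p) | H.index = n} := finite_index_subgroups m p hn0
        exact Set.toFinite _
      exact h1.subset (fun H hH => hH.1)
    have hfinT : {H : Subgroup (TorusKnotGroup m p) | H.index = n}.Finite := by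
      have : Finite ↥{H : Subgroup (TorusKnotGroup m p) | H.index = n} := finite_index_subgroups m p hn0
      exact Set.toFinite _
    set z : TorusKnotGroup m p := (PresentedGroup.of i₁) ^ p i₁ with hzdef
    change _ ≤ ({H : Subgroup (TorusKnotGroup m p) | H.index = n ∧ fixedCosetCount g H = n}.ncard : ℝ) /
      ({H : Subgroup (TorusKnotGroup m p) | H.index = n}.ncard : ℝ)
    change _ ≤ (({H : Subgroup (TorusKnotGroup m p) | H.index = n ∧ z ∈ H}.ncard : ℕ) : ℝ) at hA
    change (({H : Subgroup (TorusKnotGroup m p) | H.index = n ∧ z ∉ H}.ncard : ℕ) : ℝ) ≤ _ at hBd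
    have hgood : {H : Subgroup (TorusKnotGroup m p) | H.index = n ∧ z ∈ H}.ncard ≤
        {H : Subgroup (TorusKnotGroup m p) | H.index = n ∧ fixedCosetCount g H = n}.ncard := by
      apply Set.ncard_le_ncard _ (hfin _)
      rintro H ⟨h1, h2⟩
      exact ⟨h1, (fixed_of_mem i₁ g hgL H h2).trans h1⟩
    have htot : {H : Subgroup (TorusKnotGroup m p) | H.index = n}.ncard ≤
        {H : Subgroup (TorusKnotGroup m p) | H.index = n ∧ z ∈ H}.ncard +
        {H : Subgroup (TorusKnotGroup m p) | H.index = n ∧ z ∉ H}.ncard := by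
      refine le_trans (Set.ncard_le_ncard ?_ ((hfin _).union (hfin _))) (Set.ncard_union_le _ _)
      intro H hH
      by_cases hzH : z ∈ H
      · exact Or.inl ⟨hH, hzH⟩
      · exact Or.inr ⟨hH, hzH⟩
    have hAT : {H : Subgroup (TorusKnotGroup m p) | H.index = n ∧ z ∈ H}.ncard ≤
        {H : Subgroup (TorusKnotGroup m p) | H.index = n}.ncard :=
      Set.ncard_le_ncard (fun H hH => hH.1) hfinT
    generalize {H : Subgroup (TorusKnotGroup m p) | H.index = n ∧ fixedCosetCount g H = n}.ncard = gd at *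
    generalize {H : Subgroup (TorusKnotGroup m p) | H.index = n ∧ z ∈ H}.ncard = a at *
    generalize {H : Subgroup (TorusKnotGroup m p) | H.index = n ∧ z ∉ H}.ncard = b at *
    generalize {H : Subgroup (TorusKnotGroup m p) | H.index = n}.ncard = t at *
    have hgood' : (a : ℝ) ≤ gd := by exact_mod_cast hgood
    have htot' : (t : ℝ) ≤ a + b := by exact_mod_cast htot
    have hAT' : (a : ℝ) ≤ t := by exact_mod_cast hAT
    have ha0 : (0 : ℝ) < a := lt_of_lt_of_le (Real.exp_pos _) hA
    have ht0 : (0 : ℝ) < t := by linarith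
    rw [le_div_iff₀ ht0]
    have hbexp : (b : ℝ) ≤ Real.exp (-((n : ℝ) * (δ / 2 * Real.log n - C'))) * a := by
      refine hBd.trans ?_
      refine le_trans (le_of_eq ?_) (mul_le_mul_of_nonneg_left hA (Real.exp_pos _).le)
      rw [← Real.exp_add]
      congr 1
      rw [hC']; ring
    have hbt : (b : ℝ) ≤ Real.exp (-((n : ℝ) * (δ / 2 * Real.log n - C'))) * t :=
      hbexp.trans (mul_le_mul_of_nonneg_left hAT' (Real.exp_pos _).le)
    linarith
  · filter_upwards [Filter.eventually_ge_atTop 1] with n hn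
    unfold subgroupProb
    apply div_le_one_of_le₀ _ (by positivity)
    have := finite_index_subgroups m p (show 0 < n by omega)
    exact_mod_cast Nat.card_le_card_of_injective
      (fun H : {H : Subgroup (TorusKnotGroup m p) // H.index = n ∧ fixedCosetCount g H = n} =>
        (⟨H.1, H.2.1⟩ : {H : Subgroup (TorusKnotGroup m p) // H.index = n}))
      (fun a b h => Subtype.ext (congrArg (fun H => H.1) h))
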